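/- Under Conditions (A)–(D) with b_j ≠ 0 for all j ≥ 1, for every V ∈ C(𝒜) the limit Q(V) = lim_{k→∞} k⁻¹ log 𝔼_u exp(Σ_{n=1}^k V(u_n)) exists uniformly with respect to the deterministic initial condition u ∈ 𝒜 and does not depend on u; moreover the resulting functional Q : C(𝒜) → ℝ is convex, satisfies |Q(V₁) − Q(V₂)| ≤ ‖V₁ − V₂‖_∞ for all V₁, V₂ ∈ C(𝒜), and Q(C) = C for every constant C ∈ ℝ. -/

import Mathlib

open MeasureTheory ProbabilityTheory Filter Topology BoundedContinuousFunction
open scoped ENNReal NNReal Pointwise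

noncomputable section

/-- The sets `𝒜_k(B)`: `𝒜_0(B) = B`, `𝒜_k(B) = S(𝒜_{k-1}(B)) + 𝒦`. -/
def attain {H : Type*} [AddCommGroup H] (S : H → H) (K : Set H) (B : Set H) : ℕ → Set H
  | 0 => B
  | n + 1 => S '' attain S K B n + K

/-- The domain of attainability `𝒜(B)` from `B`: the closure of `⋃_k 𝒜_k(B)`. -/
def attainDom {H : Type*} [AddCommGroup H] [TopologicalSpace H]
    (S : H → H) (K : Set H) (B : Set H) : Set H :=
  closure (⋃ n, attain S K B n)

variable {H : Type} [NormedAddCommGroup H] [InnerProductSpace ℝ H] [CompleteSpace H]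

/-- The orthogonal projection `𝖯_N` onto the span of the first `N` vectors of an orthonormal
basis. -/
def projB (e : HilbertBasis ℕ ℝ H) (N : ℕ) (u : H) : H :=
  ∑ j ∈ Finset.range N, e.repr u j • (e j : H)

/-- Condition (A): regularity and stability. -/
def CondA (S : H → H) : Prop :=
  ContDiff ℝ 1 S ∧
  ∀ R r : ℝ, 0 < r → r < R →
    ∃ C : ℝ, 0 < C ∧ ∃ a : ℝ, 0 < a ∧ a < 1 ∧ ∃ n₀ : ℕ, 1 ≤ n₀ ∧
      (∀ u₁ ∈ Metric.closedBall (0 : H) R, ∀ u₂ ∈ Metric.closedBall (0 : H) R,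
          ‖S u₁ - S u₂‖ ≤ C * ‖u₁ - u₂‖) ∧
      ∀ u ∈ Metric.closedBall (0 : H) R, ∀ n : ℕ, n₀ ≤ n →
          ‖S^[n] u‖ ≤ max (a * ‖u‖) r

/-- Condition (B): dissipativity. -/
def CondB (S : H → H) (K : Set H) : Prop :=
  ∃ ρ : ℝ, 0 < ρ ∧ ∃ k₀ : ℝ → ℕ, Monotone k₀ ∧
    ∀ R : ℝ, 0 ≤ R → ∀ k : ℕ, k₀ R ≤ k →
      attain S K (Metric.closedBall 0 R) k ⊆ Metric.closedBall (0 : H) ρ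

/-- Condition (C): squeezing. -/
def CondC (S : H → H) (e : HilbertBasis ℕ ℝ H) : Prop :=
  ∀ R : ℝ, 0 < R → ∃ γ : ℕ → ℝ, (∀ N, 0 < γ N) ∧ Antitone γ ∧
    Tendsto γ atTop (𝓝 0) ∧
    ∀ N : ℕ, ∀ u₁ ∈ Metric.closedBall (0 : H) R, ∀ u₂ ∈ Metric.closedBall (0 : H) R,
      ‖(S u₁ - S u₂) - projB e N (S u₁ - S u₂)‖ ≤ γ N * ‖u₁ - u₂‖

/-- Condition (D): structure of the noise, `η_k = ∑_j b_j ξ_{jk} e_j` with `∑ b_j² < ∞`,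
independent scalar `ξ_{jk}` whose laws have Lipschitz densities `p_j` with `p_j(0) > 0` and
support in `[-1,1]`. -/
def CondD [MeasurableSpace H] {Ω : Type*} [MeasurableSpace Ω] (P : Measure Ω)
    (e : HilbertBasis ℕ ℝ H) (η : ℕ → Ω → H)
    (b : ℕ → ℝ) (ξ : ℕ → ℕ → Ω → ℝ) (p : ℕ → ℝ → ℝ) : Prop :=
  (∀ j, 0 ≤ b j) ∧ Summable (fun j => (b j) ^ 2) ∧
  (∀ k ω, HasSum (fun j => (b j * ξ j k ω) • (e j : H)) (η k ω)) ∧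
  (∀ j k, Measurable (ξ j k)) ∧
  iIndepFun (fun jk : ℕ × ℕ => ξ jk.1 jk.2) P ∧
  (∀ j k, Measure.map (ξ j k) P
      = (volume : Measure ℝ).withDensity fun x => ENNReal.ofReal (p j x)) ∧
  (∀ j, ∃ L : ℝ≥0, LipschitzWith L (p j)) ∧
  (∀ j, 0 < p j 0) ∧
  (∀ j, Function.support (p j) ⊆ Set.Icc (-1 : ℝ) 1)

/-- The trajectory `u_k = S(u_{k-1}) + η_k` of the random dynamical system issued from `u₀`. -/
def traj {Ω : Type*} (S : H → H) (η : ℕ → Ω → H) (u₀ : Ω → H) : ℕ → Ω → H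
  | 0 => u₀
  | k + 1 => fun ω => S (traj S η u₀ k ω) + η (k + 1) ω

/-- The (topological) support of a measure. -/
def msupp {X : Type*} [TopologicalSpace X] [MeasurableSpace X] (μ : Measure X) : Set X :=
  {x | ∀ U ∈ 𝓝 x, 0 < μ U}

/-- The occupation measures `ζ_k = k⁻¹ ∑_{n=0}^{k-1} δ_{x_n}` of a sequence. -/
def occ {X : Type*} [MeasurableSpace X] (x : ℕ → X) (k : ℕ) : ProbabilityMeasure X :=
  if hk : k = 0 then ⟨Measure.dirac (x 0), Measure.dirac.isProbabilityMeasure⟩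
  else
    ⟨(k : ℝ≥0∞)⁻¹ • ∑ n ∈ Finset.range k, Measure.dirac (x n), by
      refine ⟨?_⟩
      simp only [Measure.smul_apply, Measure.finset_sum_apply, measure_univ,
        Finset.sum_const, Finset.card_range, nsmul_eq_mul, mul_one, smul_eq_mul]
      exact ENNReal.inv_mul_cancel (Nat.cast_ne_zero.mpr hk) (ENNReal.natCast_ne_top k)⟩

/-- Large deviation principle for the sequence of events `prob k` (the laws of random
probability measures in `Z`), with rate function `I`. -/
def LDPof {Z : Type*} [TopologicalSpace Z] (prob : ℕ → Set Z → ℝ≥0∞) (I : Z → ℝ≥0∞) : Prop :=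
  (∀ F : Set Z, IsClosed F →
    Filter.limsup (fun k : ℕ => (((k : ℝ)⁻¹ : ℝ) : EReal) * ENNReal.log (prob k F)) atTop
      ≤ -(⨅ σ ∈ F, (I σ : EReal))) ∧
  (∀ G : Set Z, IsOpen G →
    -(⨅ σ ∈ G, (I σ : EReal))
      ≤ Filter.liminf (fun k : ℕ => (((k : ℝ)⁻¹ : ℝ) : EReal) * ENNReal.log (prob k G)) atTop)

/-- A good rate function: lower semicontinuous with compact level sets. -/
def GoodRate {Z : Type*} [TopologicalSpace Z] (I : Z → ℝ≥0∞) : Prop :=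
  LowerSemicontinuous I ∧ ∀ c : ℝ≥0∞, c ≠ ⊤ → IsCompact {σ : Z | I σ ≤ c}

/-!
Let `Z_k(u) = 𝔼_u exp(∑_{n=1}^k V(u_n))` and let `M_k` be its supremum over the compact set `𝒜`.
The Markov property makes `M_k` submultiplicative, so `k⁻¹ log M_k` converges by Fekete's lemma.
It then suffices to have, for every `ε > 0`, a Harnack inequality `c M_k ≤ e^{εk} Z_k(u)` on `𝒜`,
with a constant `c > 0` that depends neither on `k` nor on `u`.

For `u` and `u'` close together the noise absorbs the difference of `S u` and `S u'` in the first
`N` modes, at the cost of an event of probability `O(‖u - u'‖)`, because every `b_j` is nonzero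
and the densities are Lipschitz; the remaining modes are contracted by (C). Iterating this
one-step estimate gives `Z_k(u) ≤ e^{εk} Z_k(u') + C ‖u - u'‖ M_k` with `C` independent of `k`.
Hence `Z_k` is comparable with `M_k` on a small ball around a point where it is nearly maximal.
Finally, every point of `𝒜` is reachable from `𝒜` with a uniformly positive probability in a
bounded number of steps: with small noise the chain is driven to `0` by the attraction of `S`, and
from there along any prescribed sequence of noise values in `𝒦`; this carries the lower bound to
all of `𝒜`.
-/

section FeynmanKac

variable {X : Type*} [MeasurableSpace X]

/-- The Feynman–Kac operator `f ↦ κ (w f)` of a kernel `κ` and a weight `w`. Values in `ℝ≥0∞` spare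
all integrability side conditions. -/
def feynmanKac (κ : Kernel X X) (w f : X → ℝ≥0∞) (u : X) : ℝ≥0∞ :=
  ∫⁻ v, w v * f v ∂κ u

/-- The partition function `Z_n(u) = 𝔼_u ∏_{i=1}^n w(u_i)` of the Markov chain with transition
kernel `κ`. -/
def partitionFn (κ : Kernel X X) (w : X → ℝ≥0∞) (n : ℕ) : X → ℝ≥0∞ :=
  (feynmanKac κ w)^[n] fun _ => 1

/-- The supremum over the initial conditions `u ∈ A` of the partition function `Z_n(u)`. -/
def partitionSup (κ : Kernel X X) (w : X → ℝ≥0∞) (A : Set X) (n : ℕ) : ℝ≥0∞ :=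
  ⨆ u ∈ A, partitionFn κ w n u

/-- The set `A` is absorbing for `κ`: the chain issued from a point of `A` almost surely stays
in `A`. -/
def IsAbsorbing (κ : Kernel X X) (A : Set X) : Prop :=
  ∀ u ∈ A, ∀ᵐ v ∂κ u, v ∈ A

theorem isMarkovKernel_pow (κ : Kernel X X) [IsMarkovKernel κ] (n : ℕ) :
    IsMarkovKernel (κ ^ n) := by
  induction n with
  | zero => exact inferInstanceAs (IsMarkovKernel Kernel.id)
  | succ n ih => exact inferInstanceAs (IsMarkovKernel ((κ ^ n) ∘ₖ κ))

variable {κ : Kernel X X} {w f g : X → ℝ≥0∞} {A : Set X} {E c : ℝ≥0∞} {u : X}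

theorem measurable_feynmanKac (hw : Measurable w) (hf : Measurable f) :
    Measurable (feynmanKac κ w f) :=
  (hw.mul hf).lintegral_kernel

theorem measurable_iterate_feynmanKac (hw : Measurable w) (hf : Measurable f) (n : ℕ) :
    Measurable ((feynmanKac κ w)^[n] f) :=
  Function.Iterate.rec Measurable hf (fun _ => measurable_feynmanKac hw) n

theorem measurable_partitionFn (hw : Measurable w) (n : ℕ) : Measurable (partitionFn κ w n) :=
  measurable_iterate_feynmanKac hw measurable_const n

theorem feynmanKac_const_mul (hw : Measurable w) (hf : Measurable f) (c : ℝ≥0∞) :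
    feynmanKac κ w (fun v => c * f v) = fun v => c * feynmanKac κ w f v := by
  funext u
  simp only [feynmanKac, mul_left_comm _ c]
  exact lintegral_const_mul c (hw.mul hf)

theorem iterate_feynmanKac_const_mul (hw : Measurable w) (hf : Measurable f) (c : ℝ≥0∞) (n : ℕ) :
    (feynmanKac κ w)^[n] (fun v => c * f v) = fun v => c * (feynmanKac κ w)^[n] f v := by
  induction n with
  | zero => rfl
  | succ n ih =>
    simp only [Function.iterate_succ_apply', ih]
    exact feynmanKac_const_mul hw (measurable_iterate_feynmanKac hw hf n) c

theorem IsAbsorbing.feynmanKac_mono (hA : IsAbsorbing κ A) (hfg : ∀ v ∈ A, f v ≤ g v)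
    (hu : u ∈ A) : feynmanKac κ w f u ≤ feynmanKac κ w g u := by
  refine lintegral_mono_ae ?_
  filter_upwards [hA u hu] with v hv
  gcongr
  exact hfg v hv

theorem IsAbsorbing.iterate_feynmanKac_mono (hA : IsAbsorbing κ A) (hfg : ∀ v ∈ A, f v ≤ g v)
    (n : ℕ) (hu : u ∈ A) : (feynmanKac κ w)^[n] f u ≤ (feynmanKac κ w)^[n] g u := by
  induction n generalizing u with
  | zero => exact hfg u hu
  | succ n ih =>
    simp only [Function.iterate_succ_apply']
    exact hA.feynmanKac_mono (fun v => ih) hu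

theorem IsAbsorbing.pow (hA : IsAbsorbing κ A) (hAm : MeasurableSet A) (n : ℕ) :
    IsAbsorbing (κ ^ n) A := by
  induction n with
  | zero => exact fun u hu => (ae_dirac_iff hAm).2 hu
  | succ n ih =>
    intro u hu
    rw [ae_iff, ← Set.compl_def, Kernel.pow_succ_apply_eq_lintegral κ n u hAm.compl,
      lintegral_eq_zero_iff (Kernel.measurable_coe κ hAm.compl)]
    filter_upwards [ih u hu] with v hv using ae_iff.1 (hA v hv)

theorem IsAbsorbing.lintegral_pow_le (hA : IsAbsorbing κ A) (hw : Measurable w)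
    (hEw : ∀ v ∈ A, 1 ≤ E * w v) (hf : Measurable f) (n : ℕ) (hu : u ∈ A) :
    ∫⁻ v, f v ∂(κ ^ n) u ≤ E ^ n * (feynmanKac κ w)^[n] f u := by
  induction n generalizing u with
  | zero =>
    rw [pow_zero, pow_zero, one_mul]
    exact (lintegral_dirac' u hf).le
  | succ n ih =>
    have hTm := measurable_iterate_feynmanKac (κ := κ) hw hf n
    calc ∫⁻ v, f v ∂(κ ^ (n + 1)) u = ∫⁻ v, ∫⁻ v', f v' ∂(κ ^ n) v ∂κ u := by
          rw [pow_succ]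
          exact Kernel.lintegral_comp _ _ _ hf
      _ ≤ ∫⁻ v, E ^ (n + 1) * (w v * (feynmanKac κ w)^[n] f v) ∂κ u := by
          refine lintegral_mono_ae ?_
          filter_upwards [hA u hu] with v hv
          calc ∫⁻ v', f v' ∂(κ ^ n) v ≤ 1 * (E ^ n * (feynmanKac κ w)^[n] f v) := by
                rw [one_mul]
                exact ih hv
            _ ≤ E * w v * (E ^ n * (feynmanKac κ w)^[n] f v) := by
                gcongr
                exact hEw v hv
            _ = E ^ (n + 1) * (w v * (feynmanKac κ w)^[n] f v) := by ring
      _ = E ^ (n + 1) * (feynmanKac κ w)^[n + 1] f u := by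
          rw [Function.iterate_succ_apply', feynmanKac, ← lintegral_const_mul _ (by fun_prop)]

theorem le_partitionSup (κ : Kernel X X) (w : X → ℝ≥0∞) (n : ℕ) (hu : u ∈ A) :
    partitionFn κ w n u ≤ partitionSup κ w A n :=
  le_iSup₂ (f := fun u (_ : u ∈ A) => partitionFn κ w n u) u hu

theorem partitionFn_zero (κ : Kernel X X) (w : X → ℝ≥0∞) (u : X) : partitionFn κ w 0 u = 1 := rfl

theorem partitionFn_succ (κ : Kernel X X) (w : X → ℝ≥0∞) (n : ℕ) (u : X) :
    partitionFn κ w (n + 1) u = ∫⁻ v, w v * partitionFn κ w n v ∂κ u := by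
  simp only [partitionFn, Function.iterate_succ_apply', feynmanKac]

theorem IsAbsorbing.partitionFn_add_le (hA : IsAbsorbing κ A) (hw : Measurable w) (k n : ℕ)
    (hc : ∀ v ∈ A, partitionFn κ w n v ≤ c) (hu : u ∈ A) :
    partitionFn κ w (k + n) u ≤ c * partitionFn κ w k u := by
  have hmono := hA.iterate_feynmanKac_mono (w := w) (g := fun _ => c * 1) (by simpa using hc) k hu
  rwa [iterate_feynmanKac_const_mul hw measurable_const, partitionFn,
    ← Function.iterate_add_apply] at hmono

theorem IsAbsorbing.partitionSup_add_le (hA : IsAbsorbing κ A) (hw : Measurable w) (k n : ℕ) :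
    partitionSup κ w A (k + n) ≤ partitionSup κ w A k * partitionSup κ w A n :=
  iSup₂_le fun u hu => calc
    partitionFn κ w (k + n) u ≤ partitionSup κ w A n * partitionFn κ w k u :=
      hA.partitionFn_add_le hw k n (fun _ => le_partitionSup κ w n) hu
    _ ≤ partitionSup κ w A k * partitionSup κ w A n := by
      rw [mul_comm]
      gcongr
      exact le_partitionSup κ w k hu

variable [IsMarkovKernel κ]

theorem IsAbsorbing.partitionFn_le_pow (hA : IsAbsorbing κ A) (hwE : ∀ v ∈ A, w v ≤ E) (n : ℕ)
    (hu : u ∈ A) : partitionFn κ w n u ≤ E ^ n := by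
  induction n generalizing u with
  | zero => simp [partitionFn_zero]
  | succ n ih =>
    calc partitionFn κ w (n + 1) u ≤ ∫⁻ _, E * E ^ n ∂κ u := by
          rw [partitionFn_succ]
          refine lintegral_mono_ae ?_
          filter_upwards [hA u hu] with v hv
          exact mul_le_mul' (hwE v hv) (ih hv)
      _ = E ^ (n + 1) := by simp [pow_succ']

theorem IsAbsorbing.partitionSup_le_pow (hA : IsAbsorbing κ A) (hwE : ∀ v ∈ A, w v ≤ E) (n : ℕ) :
    partitionSup κ w A n ≤ E ^ n :=
  iSup₂_le fun _ hu => hA.partitionFn_le_pow hwE n hu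

theorem IsAbsorbing.one_le_pow_mul_partitionFn (hA : IsAbsorbing κ A) (hw : Measurable w)
    (hEw : ∀ v ∈ A, 1 ≤ E * w v) (n : ℕ) (hu : u ∈ A) : 1 ≤ E ^ n * partitionFn κ w n u := by
  have hκn := isMarkovKernel_pow κ n
  simpa [partitionFn] using hA.lintegral_pow_le hw hEw measurable_const (f := fun _ => 1) n hu

theorem IsAbsorbing.partitionSup_le_mul_partitionSup_succ (hA : IsAbsorbing κ A)
    (hw : Measurable w) (hEw : ∀ v ∈ A, 1 ≤ E * w v) (n : ℕ) :
    partitionSup κ w A n ≤ E * partitionSup κ w A (n + 1) := by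
  refine iSup₂_le fun u hu => ?_
  have hone : ∀ v ∈ A, (1 : ℝ≥0∞) ≤ E * partitionFn κ w 1 v := fun v hv => by
    simpa using hA.one_le_pow_mul_partitionFn hw hEw 1 hv
  calc partitionFn κ w n u ≤ (feynmanKac κ w)^[n] (fun v => E * partitionFn κ w 1 v) u :=
        hA.iterate_feynmanKac_mono hone n hu
    _ = E * partitionFn κ w (n + 1) u := by
        rw [iterate_feynmanKac_const_mul hw (measurable_partitionFn hw 1), partitionFn,
          partitionFn, Function.iterate_add_apply]
    _ ≤ E * partitionSup κ w A (n + 1) := by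
        gcongr
        exact le_partitionSup κ w (n + 1) hu

theorem IsAbsorbing.partitionFn_ne_zero (hA : IsAbsorbing κ A) (hw : Measurable w)
    (hEw : ∀ v ∈ A, 1 ≤ E * w v) (n : ℕ) (hu : u ∈ A) : partitionFn κ w n u ≠ 0 := fun h0 => by
  simpa [h0] using hA.one_le_pow_mul_partitionFn hw hEw n hu

theorem IsAbsorbing.partitionSup_ne_top (hA : IsAbsorbing κ A) (hwE : ∀ v ∈ A, w v ≤ E)
    (hE : E ≠ ⊤) (n : ℕ) : partitionSup κ w A n ≠ ⊤ :=
  ne_top_of_le_ne_top (ENNReal.pow_ne_top hE) (hA.partitionSup_le_pow hwE n)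

theorem IsAbsorbing.toReal_partitionSup_pos (hA : IsAbsorbing κ A) (hAne : A.Nonempty)
    (hw : Measurable w) (hwE : ∀ v ∈ A, w v ≤ E) (hEw : ∀ v ∈ A, 1 ≤ E * w v) (hE : E ≠ ⊤)
    (n : ℕ) : 0 < (partitionSup κ w A n).toReal := by
  obtain ⟨u, hu⟩ := hAne
  have hpos := (hA.partitionFn_ne_zero hw hEw n hu).bot_lt.trans_le (le_partitionSup κ w n hu)
  exact ENNReal.toReal_pos hpos.ne' (hA.partitionSup_ne_top hwE hE n)

theorem IsAbsorbing.exists_partitionSup_le_two_mul (hA : IsAbsorbing κ A) (hAne : A.Nonempty)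
    (hwE : ∀ v ∈ A, w v ≤ E) (hE : E ≠ ⊤) (n : ℕ) :
    ∃ v ∈ A, partitionSup κ w A n ≤ 2 * partitionFn κ w n v := by
  by_contra! hlt
  obtain ⟨v, hv⟩ := hAne
  have hM0 : partitionSup κ w A n ≠ 0 := (zero_le.trans_lt (hlt v hv)).ne'
  have hMtop := hA.partitionSup_ne_top hwE hE n
  refine (ENNReal.half_lt_self hM0 hMtop).not_ge (iSup₂_le fun v hv => ?_)
  rw [ENNReal.le_div_iff_mul_le (by simp) (by simp), mul_comm]
  exact (hlt v hv).le

end FeynmanKac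

section Squeezing

variable {X : Type*} [PseudoEMetricSpace X] [MeasurableSpace X]

/-- The kernel `κ` squeezes `A` with rate `g` and defect `D`: one transition from `u` and one from
`u'` can be coupled so that they end up within `g * edist u u'` of each other, up to an event of
probability at most `D * edist u u'`. This is expressed in the dual form (in the sense of
Kantorovich duality) in which couplings are used, so that no coupling has to be constructed. -/
def IsSqueezing (κ : Kernel X X) (A : Set X) (g D : ℝ≥0∞) : Prop :=
  ∀ u ∈ A, ∀ u' ∈ A, ∀ F G : X → ℝ≥0∞, Measurable F → Measurable G → ∀ c : ℝ≥0∞,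
    (∀ v ∈ A, F v ≤ c) →
    (∀ v ∈ A, ∀ v' ∈ A, edist v v' ≤ g * edist u u' → F v ≤ G v') →
    ∫⁻ v, F v ∂κ u ≤ ∫⁻ v, G v ∂κ u' + c * (D * edist u u')

variable {κ : Kernel X X} [IsMarkovKernel κ] {w : X → ℝ≥0∞} {A : Set X} {g D E q δ : ℝ≥0∞}

theorem IsSqueezing.partitionFn_succ_le (hsq : IsSqueezing κ A g D) (hw : Measurable w)
    (hwE : ∀ v ∈ A, w v ≤ E) (hg : g ≤ 1)
    (hmod : ∀ v ∈ A, ∀ v' ∈ A, edist v v' ≤ δ → w v ≤ q * w v') {C : ℝ≥0∞} {k : ℕ}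
    (hk : ∀ v ∈ A, ∀ v' ∈ A, edist v v' ≤ δ → partitionFn κ w k v ≤
      q ^ k * partitionFn κ w k v' + C * edist v v' * partitionSup κ w A k)
    {u u' : X} (hu : u ∈ A) (hu' : u' ∈ A) (huu' : edist u u' ≤ δ) :
    partitionFn κ w (k + 1) u ≤ q ^ (k + 1) * partitionFn κ w (k + 1) u' +
      (E * D + q * E * C * g) * edist u u' * partitionSup κ w A k := by
  set Z := partitionFn κ w k
  set M := partitionSup κ w A k
  set d := edist u u'
  have hZm : Measurable Z := measurable_partitionFn hw k
  have hcoupled : ∀ v ∈ A, ∀ v' ∈ A, edist v v' ≤ g * d →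
      w v * Z v ≤ q ^ (k + 1) * (w v' * Z v') + q * E * C * g * d * M := by
    intro v hv v' hv' hvv'
    have hvδ : edist v v' ≤ δ := calc
      edist v v' ≤ g * d := hvv'
      _ ≤ 1 * d := by gcongr
      _ ≤ δ := by rwa [one_mul]
    calc w v * Z v ≤ q * w v' * (q ^ k * Z v' + C * edist v v' * M) :=
          mul_le_mul' (hmod v hv v' hv' hvδ) (hk v hv v' hv' hvδ)
      _ = q ^ (k + 1) * (w v' * Z v') + q * w v' * C * edist v v' * M := by ring
      _ ≤ q ^ (k + 1) * (w v' * Z v') + q * E * C * (g * d) * M := by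
          gcongr
          exact hwE v' hv'
      _ = q ^ (k + 1) * (w v' * Z v') + q * E * C * g * d * M := by ring
  have hbound : ∀ v ∈ A, w v * Z v ≤ E * M := fun v hv =>
    mul_le_mul' (hwE v hv) (le_partitionSup κ w k hv)
  calc partitionFn κ w (k + 1) u = ∫⁻ v, w v * Z v ∂κ u := partitionFn_succ κ w k u
    _ ≤ ∫⁻ v, (q ^ (k + 1) * (w v * Z v) + q * E * C * g * d * M) ∂κ u' + E * M * (D * d) :=
        hsq u hu u' hu' _ _ (by fun_prop) (by fun_prop) _ hbound hcoupled
    _ = q ^ (k + 1) * partitionFn κ w (k + 1) u' + q * E * C * g * d * M + E * M * (D * d) := by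
        rw [lintegral_add_right _ measurable_const, lintegral_const_mul _ (by fun_prop),
          lintegral_const, measure_univ, mul_one, partitionFn_succ]
    _ = q ^ (k + 1) * partitionFn κ w (k + 1) u' + (E * D + q * E * C * g) * d * M := by ring

theorem IsSqueezing.partitionFn_le (hsq : IsSqueezing κ A g D) (hA : IsAbsorbing κ A)
    (hw : Measurable w) (hwE : ∀ v ∈ A, w v ≤ E) (hEw : ∀ v ∈ A, 1 ≤ E * w v) (hg : g ≤ 1)
    (hqg : 2 * (q * E ^ 2 * g) ≤ 1)
    (hmod : ∀ v ∈ A, ∀ v' ∈ A, edist v v' ≤ δ → w v ≤ q * w v') (k : ℕ) :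
    ∀ u ∈ A, ∀ u' ∈ A, edist u u' ≤ δ → partitionFn κ w k u ≤
      q ^ k * partitionFn κ w k u' + 2 * E ^ 2 * D * edist u u' * partitionSup κ w A k := by
  induction k with
  | zero =>
    intro u _ u' _ _
    simp [partitionFn_zero]
  | succ k ih =>
    intro u hu u' hu' huu'
    set M' := partitionSup κ w A (k + 1)
    -- The contraction `g` halves the constant `2 * E ^ 2 * D`, which makes room for the new defect.
    have hconst : (E * D + q * E * (2 * E ^ 2 * D) * g) * E ≤ 2 * E ^ 2 * D := calc
      _ = E ^ 2 * D + 2 * (q * E ^ 2 * g) * (E ^ 2 * D) := by ring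
      _ ≤ E ^ 2 * D + 1 * (E ^ 2 * D) := by gcongr
      _ = 2 * E ^ 2 * D := by ring
    calc partitionFn κ w (k + 1) u ≤ q ^ (k + 1) * partitionFn κ w (k + 1) u' +
          (E * D + q * E * (2 * E ^ 2 * D) * g) * edist u u' * partitionSup κ w A k :=
        hsq.partitionFn_succ_le hw hwE hg hmod ih hu hu' huu'
      _ ≤ q ^ (k + 1) * partitionFn κ w (k + 1) u' +
          (E * D + q * E * (2 * E ^ 2 * D) * g) * edist u u' * (E * M') := by
        gcongr
        exact hA.partitionSup_le_mul_partitionSup_succ hw hEw k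
      _ = q ^ (k + 1) * partitionFn κ w (k + 1) u' +
          (E * D + q * E * (2 * E ^ 2 * D) * g) * E * edist u u' * M' := by ring
      _ ≤ q ^ (k + 1) * partitionFn κ w (k + 1) u' + 2 * E ^ 2 * D * edist u u' * M' := by gcongr

end Squeezing

section Reachability

variable {X : Type*} [MeasurableSpace X]

/-- The point `y` is uniformly reachable from `A`: every neighbourhood of `y` is visited, at a time
common to all initial conditions in `A`, with a probability bounded away from `0`. -/
def IsReachable [TopologicalSpace X] (κ : Kernel X X) (A : Set X) (y : X) : Prop :=
  ∀ U ∈ 𝓝 y, ∃ s : ℕ, ∃ c : ℝ≥0∞, c ≠ 0 ∧ ∀ u ∈ A, c ≤ (κ ^ s) u U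

theorem isClosed_setOf_isReachable [TopologicalSpace X] (κ : Kernel X X) (A : Set X) :
    IsClosed {y | IsReachable κ A y} := by
  refine isClosed_iff_nhds.2 fun y hy U hU => ?_
  obtain ⟨y', hy'U, hy'⟩ := hy _ (interior_mem_nhds.2 hU)
  exact hy' U (mem_interior_iff_mem_nhds.1 hy'U)

theorem IsAbsorbing.mul_le_pow_succ {κ : Kernel X X} {A U W : Set X} {c c' : ℝ≥0∞} {u : X} {n : ℕ}
    (hA : IsAbsorbing κ A) (hAm : MeasurableSet A) (hU : MeasurableSet U) (hW : MeasurableSet W)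
    (hu : u ∈ A) (hcU : c ≤ (κ ^ n) u U) (hcW : ∀ v ∈ U, v ∈ A → c' ≤ κ v W) :
    c' * c ≤ (κ ^ (n + 1)) u W := calc
  c' * c ≤ c' * (κ ^ n) u U := by gcongr
  _ = ∫⁻ _ in U, c' ∂(κ ^ n) u := (setLIntegral_const U c').symm
  _ ≤ ∫⁻ v in U, κ v W ∂(κ ^ n) u := by
      refine lintegral_mono_ae ?_
      filter_upwards [ae_restrict_mem hU, ae_restrict_of_ae (hA.pow hAm n u hu)] with v hvU hvA
      exact hcW v hvU hvA
  _ ≤ ∫⁻ v, κ v W ∂(κ ^ n) u := setLIntegral_le_lintegral _ _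
  _ = (κ ^ (n + 1)) u W := (Kernel.pow_succ_apply_eq_lintegral κ n u hW).symm

variable [PseudoMetricSpace X] {κ : Kernel X X} {A : Set X}

theorem exists_uniform_reachable (hAc : IsCompact A) (hreach : ∀ y ∈ A, IsReachable κ A y) {r : ℝ}
    (hr : 0 < r) : ∃ n : ℕ, ∃ c : ℝ≥0∞, c ≠ 0 ∧
      ∀ y ∈ A, ∃ s ≤ n, ∀ u ∈ A, c ≤ (κ ^ s) u (Metric.ball y r) := by
  refine hAc.induction_on (p := fun B => ∃ n : ℕ, ∃ c : ℝ≥0∞, c ≠ 0 ∧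
    ∀ y ∈ B, ∃ s ≤ n, ∀ u ∈ A, c ≤ (κ ^ s) u (Metric.ball y r))
    ⟨0, 1, one_ne_zero, by simp⟩ ?_ ?_ ?_
  · rintro B B' hBB' ⟨n, c, hc, h⟩
    exact ⟨n, c, hc, fun y hy => h y (hBB' hy)⟩
  · rintro B B' ⟨n, c, hc, h⟩ ⟨n', c', hc', h'⟩
    refine ⟨max n n', min c c', (lt_min hc.bot_lt hc'.bot_lt).ne', ?_⟩
    rintro y (hy | hy)
    · obtain ⟨s, hs, hsc⟩ := h y hy
      exact ⟨s, hs.trans (le_max_left _ _), fun u hu => (min_le_left _ _).trans (hsc u hu)⟩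
    · obtain ⟨s, hs, hsc⟩ := h' y hy
      exact ⟨s, hs.trans (le_max_right _ _), fun u hu => (min_le_right _ _).trans (hsc u hu)⟩
  · intro y hy
    have hball := Metric.ball_mem_nhds y (half_pos hr)
    obtain ⟨s, c, hc, h⟩ := hreach y hy _ hball
    refine ⟨Metric.ball y (r / 2), mem_nhdsWithin_of_mem_nhds hball, s, c, hc, fun z hz => ?_⟩
    refine ⟨s, le_rfl, fun u hu => (h u hu).trans (measure_mono ?_)⟩
    refine Metric.ball_subset_ball' ?_
    linarith [Metric.mem_ball'.1 hz]

end Reachability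

section Harnack

theorem le_four_mul_of_le_two_mul {M a b x : ℝ≥0∞} (hM : M ≠ ⊤) (hMa : M ≤ 2 * a)
    (hx : 4 * x ≤ 1) (hab : a ≤ b + x * M) : M ≤ 4 * b := by
  refine (ENNReal.add_le_add_iff_right hM).1 ?_
  calc M + M = 2 * M := (two_mul M).symm
    _ ≤ 2 * (2 * (b + x * M)) := by
      gcongr
      exact hMa.trans (by gcongr)
    _ = 4 * b + 4 * x * M := by ring
    _ ≤ 4 * b + 1 * M := by gcongr
    _ = 4 * b + M := by rw [one_mul]

theorem exists_pos_ofReal_le_and_mul_le_one {δ C : ℝ≥0∞} (hδ : δ ≠ 0) (hC : C ≠ ⊤) :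
    ∃ r : ℝ, 0 < r ∧ ENNReal.ofReal r ≤ δ ∧ C * ENNReal.ofReal r ≤ 1 := by
  have h0 : Tendsto ENNReal.ofReal (𝓝[>] 0) (𝓝 0) := by
    simpa using (ENNReal.continuous_ofReal.tendsto 0).mono_left nhdsWithin_le_nhds
  have hC0 : Tendsto (fun r => C * ENNReal.ofReal r) (𝓝[>] 0) (𝓝 0) := by
    simpa using ENNReal.Tendsto.const_mul h0 (Or.inr hC)
  exact (eventually_mem_nhdsWithin.and ((h0.eventually_le_const hδ.bot_lt).and
    (hC0.eventually_le_const one_pos))).exists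

variable {X : Type*} [MeasurableSpace X] {κ : Kernel X X} [IsMarkovKernel κ] {w : X → ℝ≥0∞}
  {A : Set X} {E : ℝ≥0∞}

theorem IsAbsorbing.mul_le_pow_mul_partitionFn (hA : IsAbsorbing κ A) (hw : Measurable w)
    (hwE : ∀ v ∈ A, w v ≤ E) (hEw : ∀ v ∈ A, 1 ≤ E * w v) {c b M : ℝ≥0∞} {k s : ℕ} {U : Set X}
    (hU : MeasurableSet U) (hM : ∀ v ∈ U, v ∈ A → M ≤ b * partitionFn κ w k v) {u : X}
    (hu : u ∈ A) (hc : c ≤ (κ ^ s) u U) :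
    c * M ≤ E ^ (2 * s) * (b * partitionFn κ w k u) := by
  have hind : ∀ v ∈ A, U.indicator (fun _ => M) v ≤ b * partitionFn κ w k v := by
    intro v hv
    by_cases hvU : v ∈ U
    · rw [Set.indicator_of_mem hvU]
      exact hM v hvU hv
    · simp only [Set.indicator_of_notMem hvU, zero_le]
  calc c * M ≤ (κ ^ s) u U * M := by gcongr
    _ = ∫⁻ v, U.indicator (fun _ => M) v ∂(κ ^ s) u := by
        rw [lintegral_indicator_const hU, mul_comm]
    _ ≤ E ^ s * (feynmanKac κ w)^[s] (U.indicator fun _ => M) u :=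
        hA.lintegral_pow_le hw hEw (measurable_const.indicator hU) s hu
    _ ≤ E ^ s * (feynmanKac κ w)^[s] (fun v => b * partitionFn κ w k v) u := by
        gcongr
        exact hA.iterate_feynmanKac_mono hind s hu
    _ = E ^ s * (b * partitionFn κ w (k + s) u) := by
        rw [iterate_feynmanKac_const_mul hw (measurable_partitionFn hw k), partitionFn,
          ← Function.iterate_add_apply, add_comm s k, ← partitionFn]
    _ ≤ E ^ s * (b * (E ^ s * partitionFn κ w k u)) := by
        gcongr
        exact hA.partitionFn_add_le hw k s (fun v => hA.partitionFn_le_pow hwE s) hu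
    _ = E ^ (2 * s) * (b * partitionFn κ w k u) := by ring

theorem exists_partitionSup_le_mul_partitionFn [PseudoMetricSpace X] [OpensMeasurableSpace X]
    (hA : IsAbsorbing κ A) (hAc : IsCompact A) (hreach : ∀ y ∈ A, IsReachable κ A y)
    (hw : Measurable w) (hwE : ∀ v ∈ A, w v ≤ E) (hEw : ∀ v ∈ A, 1 ≤ E * w v) (hE : E ≠ ⊤)
    {q C δ : ℝ≥0∞} (hδ : δ ≠ 0) (hC : C ≠ ⊤)
    (hle : ∀ k, ∀ u ∈ A, ∀ u' ∈ A, edist u u' ≤ δ → partitionFn κ w k u ≤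
      q ^ k * partitionFn κ w k u' + C * edist u u' * partitionSup κ w A k) :
    ∃ B : ℝ≥0∞, B ≠ ⊤ ∧ ∀ k, ∀ u ∈ A, partitionSup κ w A k ≤ B * (q ^ k * partitionFn κ w k u) := by
  obtain ⟨r, hr, hrδ, hrC⟩ :=
    exists_pos_ofReal_le_and_mul_le_one hδ (ENNReal.mul_ne_top (by simp : (4 : ℝ≥0∞) ≠ ⊤) hC)
  obtain ⟨n, c, hc, hnc⟩ := exists_uniform_reachable hAc hreach hr
  refine ⟨c⁻¹ * (E ^ (2 * n) * 4), ?_, fun k u hu => ?_⟩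
  · finiteness
  have hE1 : 1 ≤ E := by
    have hEE : 1 ≤ E ^ 2 := (hEw u hu).trans (by rw [sq]; gcongr; exact hwE u hu)
    exact (one_le_pow_iff two_ne_zero).1 hEE
  obtain ⟨v₀, hv₀, hMv₀⟩ := hA.exists_partitionSup_le_two_mul ⟨u, hu⟩ hwE hE k
  obtain ⟨s, hsn, hs⟩ := hnc v₀ hv₀
  have hnear : ∀ v ∈ Metric.ball v₀ r, v ∈ A →
      partitionSup κ w A k ≤ 4 * q ^ k * partitionFn κ w k v := by
    intro v hv hvA
    have hvr : edist v₀ v ≤ ENNReal.ofReal r := by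
      rw [edist_dist]
      exact ENNReal.ofReal_le_ofReal (Metric.mem_ball'.1 hv).le
    rw [mul_assoc]
    refine le_four_mul_of_le_two_mul (hA.partitionSup_ne_top hwE hE k) hMv₀ ?_
      (hle k v₀ hv₀ v hvA (hvr.trans hrδ))
    rw [← mul_assoc]
    exact le_trans (by gcongr) hrC
  have hcM := hA.mul_le_pow_mul_partitionFn hw hwE hEw Metric.isOpen_ball.measurableSet hnear hu
    (hs u hu)
  have hκs := isMarkovKernel_pow κ s
  have hctop : c ≠ ⊤ := ne_top_of_le_ne_top (measure_ne_top _ _) (hs u hu)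
  rw [mul_assoc, ← ENNReal.mul_le_iff_le_inv hc hctop]
  calc c * partitionSup κ w A k ≤ E ^ (2 * s) * (4 * q ^ k * partitionFn κ w k u) := hcM
    _ ≤ E ^ (2 * n) * (4 * q ^ k * partitionFn κ w k u) := by gcongr
    _ = E ^ (2 * n) * 4 * (q ^ k * partitionFn κ w k u) := by ring

end Harnack

section Pressure

theorem tendstoUniformlyOn_inv_mul_of_subadditive {X : Type*} {A : Set X} {m : ℕ → ℝ}
    (hm : Subadditive m) (hbdd : BddBelow (Set.range fun n : ℕ => m n / n)) {a : ℕ → X → ℝ}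
    (ham : ∀ k, ∀ u ∈ A, a k u ≤ m k)
    (hma : ∀ ε : ℝ, 0 < ε → ∃ c : ℝ, ∀ k : ℕ, ∀ u ∈ A, m k ≤ c + k * ε + a k u) :
    TendstoUniformlyOn (fun (k : ℕ) u => (k : ℝ)⁻¹ * a k u) (fun _ => hm.lim) atTop A := by
  rw [Metric.tendstoUniformlyOn_iff]
  intro ε hε
  obtain ⟨c, hc⟩ := hma (ε / 3) (by positivity)
  have hlim : ∀ᶠ n : ℕ in atTop, |m n / n - hm.lim| < ε / 3 :=
    Metric.tendsto_nhds.1 (hm.tendsto_lim hbdd) (ε / 3) (by positivity)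
  have hcn : ∀ᶠ n : ℕ in atTop, c / n < ε / 3 :=
    (tendsto_const_div_atTop_nhds_zero_nat c).eventually_lt_const (by positivity)
  filter_upwards [hlim, hcn, eventually_gt_atTop 0] with n hlimn hcn hn u hu
  have : (0 : ℝ) < n := by exact_mod_cast hn
  have hupper : a n u / n ≤ m n / n := by
    gcongr
    exact ham n u hu
  have hlower : m n / n ≤ c / n + ε / 3 + a n u / n := by
    calc m n / n ≤ (c + n * (ε / 3) + a n u) / n := by
          gcongr
          exact hc n u hu
      _ = c / n + ε / 3 + a n u / n := by field_simp
  rw [Real.dist_eq, inv_mul_eq_div, abs_sub_comm, abs_lt]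
  constructor <;> linarith [abs_lt.1 hlimn]

theorem log_toReal_le_add_log_toReal {x y : ℝ≥0∞} {a : ℝ} (hx : x ≠ 0) (hy : y ≠ ⊤)
    (hxy : x ≤ ENNReal.ofReal (Real.exp a) * y) :
    Real.log x.toReal ≤ a + Real.log y.toReal := by
  have hy0 : y ≠ 0 := by
    rintro rfl
    simp only [mul_zero, nonpos_iff_eq_zero] at hxy
    exact hx hxy
  have hpos : 0 < y.toReal := ENNReal.toReal_pos hy0 hy
  have htop : ENNReal.ofReal (Real.exp a) * y ≠ ⊤ := by finiteness
  have hreal := ENNReal.toReal_mono htop hxy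
  rw [ENNReal.toReal_mul, ENNReal.toReal_ofReal (Real.exp_pos a).le] at hreal
  calc Real.log x.toReal ≤ Real.log (Real.exp a * y.toReal) :=
        Real.log_le_log (ENNReal.toReal_pos hx (ne_top_of_le_ne_top htop hxy)) hreal
    _ = a + Real.log y.toReal := by
        rw [Real.log_mul (Real.exp_pos a).ne' hpos.ne', Real.log_exp]

/-- The weight `exp ∘ V` of a potential `V`. -/
def expWeight {X : Type*} (V : X → ℝ) (v : X) : ℝ≥0∞ :=
  ENNReal.ofReal (Real.exp (V v))

theorem expWeight_le_exp_mul_expWeight {X : Type*} {V : X → ℝ} {a : ℝ} {v v' : X}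
    (h : V v ≤ a + V v') : expWeight V v ≤ ENNReal.ofReal (Real.exp a) * expWeight V v' := by
  rw [expWeight, expWeight, ← ENNReal.ofReal_mul (Real.exp_pos a).le, ← Real.exp_add]
  gcongr

theorem one_le_exp_mul_expWeight {X : Type*} {V : X → ℝ} {a : ℝ} {v : X} (h : 0 ≤ a + V v) :
    1 ≤ ENNReal.ofReal (Real.exp a) * expWeight V v := by
  rw [expWeight, ← ENNReal.ofReal_mul (Real.exp_pos a).le, ← Real.exp_add, ENNReal.one_le_ofReal]
  exact Real.one_le_exp h

theorem ofReal_exp_pow (a : ℝ) (n : ℕ) :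
    ENNReal.ofReal (Real.exp a) ^ n = ENNReal.ofReal (Real.exp (n * a)) := by
  rw [← ENNReal.ofReal_pow (Real.exp_pos a).le, ← Real.exp_nat_mul]

variable {X : Type*} [MeasurableSpace X] {κ : Kernel X X} [IsMarkovKernel κ] {A : Set X}
  {w : X → ℝ≥0∞}

theorem IsAbsorbing.subadditive_log_partitionSup (hA : IsAbsorbing κ A) (hAne : A.Nonempty)
    (hw : Measurable w) {E : ℝ≥0∞} (hwE : ∀ v ∈ A, w v ≤ E) (hEw : ∀ v ∈ A, 1 ≤ E * w v)
    (hE : E ≠ ⊤) : Subadditive fun k => Real.log (partitionSup κ w A k).toReal := by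
  intro m n
  have hpos := hA.toReal_partitionSup_pos hAne hw hwE hEw hE
  have htop := hA.partitionSup_ne_top hwE hE
  rw [← Real.log_mul (hpos m).ne' (hpos n).ne', ← ENNReal.toReal_mul]
  exact Real.log_le_log (hpos _) (ENNReal.toReal_mono (ENNReal.mul_ne_top (htop m) (htop n))
    (hA.partitionSup_add_le hw m n))

theorem IsAbsorbing.neg_mul_le_log_partitionFn (hA : IsAbsorbing κ A) (hw : Measurable w) {L : ℝ}
    (hLw : ∀ v ∈ A, 1 ≤ ENNReal.ofReal (Real.exp L) * w v) {k : ℕ} {u : X} (hu : u ∈ A)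
    (htop : partitionFn κ w k u ≠ ⊤) : -(k * L) ≤ Real.log (partitionFn κ w k u).toReal := by
  have hone := hA.one_le_pow_mul_partitionFn hw hLw k hu
  rw [ofReal_exp_pow] at hone
  have hlog := log_toReal_le_add_log_toReal one_ne_zero htop hone
  rw [ENNReal.toReal_one, Real.log_one] at hlog
  linarith

theorem IsAbsorbing.exists_tendstoUniformlyOn_log_partitionFn (hA : IsAbsorbing κ A)
    (hAne : A.Nonempty) (hw : Measurable w) {L : ℝ}
    (hwL : ∀ v ∈ A, w v ≤ ENNReal.ofReal (Real.exp L))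
    (hLw : ∀ v ∈ A, 1 ≤ ENNReal.ofReal (Real.exp L) * w v)
    (hharnack : ∀ ε : ℝ, 0 < ε → ∃ B : ℝ≥0∞, B ≠ ⊤ ∧ ∀ k, ∀ u ∈ A, partitionSup κ w A k ≤
      B * (ENNReal.ofReal (Real.exp ε) ^ k * partitionFn κ w k u)) :
    ∃ l : ℝ, TendstoUniformlyOn
      (fun (k : ℕ) u => (k : ℝ)⁻¹ * Real.log (partitionFn κ w k u).toReal)
      (fun _ => l) atTop A := by
  have htop := hA.partitionSup_ne_top hwL ENNReal.ofReal_ne_top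
  have hZtop : ∀ k, ∀ u ∈ A, partitionFn κ w k u ≠ ⊤ := fun k u hu =>
    ne_top_of_le_ne_top (htop k) (le_partitionSup κ w k hu)
  have hle : ∀ k, ∀ u ∈ A, Real.log (partitionFn κ w k u).toReal ≤
      Real.log (partitionSup κ w A k).toReal := fun k u hu =>
    Real.log_le_log (ENNReal.toReal_pos (hA.partitionFn_ne_zero hw hLw k hu) (hZtop k u hu))
      (ENNReal.toReal_mono (htop k) (le_partitionSup κ w k hu))
  refine ⟨_, tendstoUniformlyOn_inv_mul_of_subadditive
    (hA.subadditive_log_partitionSup hAne hw hwL hLw ENNReal.ofReal_ne_top) ?_ hle ?_⟩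
  · refine ⟨min 0 (-L), ?_⟩
    rintro _ ⟨n, rfl⟩
    rcases n.eq_zero_or_pos with rfl | hn
    · simp
    · obtain ⟨u, hu⟩ := hAne
      refine (min_le_right _ _).trans ((le_div_iff₀ (by exact_mod_cast hn)).2 ?_)
      linarith [hA.neg_mul_le_log_partitionFn hw hLw hu (hZtop n u hu), hle n u hu]
  · intro ε hε
    obtain ⟨B, hB, hBk⟩ := hharnack ε hε
    refine ⟨B.toReal, fun k u hu => log_toReal_le_add_log_toReal
      (ENNReal.toReal_pos_iff.1 (hA.toReal_partitionSup_pos hAne hw hwL hLw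
        ENNReal.ofReal_ne_top k)).1.ne' (hZtop k u hu) ((hBk k u hu).trans ?_)⟩
    rw [ofReal_exp_pow, ← mul_assoc, Real.exp_add, ENNReal.ofReal_mul (Real.exp_pos _).le]
    gcongr
    exact (ENNReal.le_ofReal_iff_toReal_le hB (Real.exp_pos _).le).2
      (by linarith [Real.add_one_le_exp B.toReal])

theorem exists_tendstoUniformlyOn_log_partitionFn_expWeight [PseudoMetricSpace X]
    [OpensMeasurableSpace X] (hA : IsAbsorbing κ A) (hAc : IsCompact A) (hAne : A.Nonempty)
    (hsq : ∀ g : ℝ≥0∞, g ≠ 0 → ∃ D : ℝ≥0∞, D ≠ ⊤ ∧ IsSqueezing κ A g D)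
    (hreach : ∀ y ∈ A, IsReachable κ A y) {V : X → ℝ} (hV : Measurable V)
    (hVA : ContinuousOn V A) :
    ∃ l : ℝ, TendstoUniformlyOn
      (fun (k : ℕ) u => (k : ℝ)⁻¹ * Real.log (partitionFn κ (expWeight V) k u).toReal)
      (fun _ => l) atTop A := by
  obtain ⟨L, hL⟩ := hAc.exists_bound_of_continuousOn hVA
  set w := expWeight V
  have hw : Measurable w := hV.exp.ennreal_ofReal
  have hwL : ∀ v ∈ A, w v ≤ ENNReal.ofReal (Real.exp L) := fun v hv =>
    ENNReal.ofReal_le_ofReal (Real.exp_le_exp.2 (abs_le.1 (hL v hv)).2)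
  have hLw : ∀ v ∈ A, 1 ≤ ENNReal.ofReal (Real.exp L) * w v := fun v hv =>
    one_le_exp_mul_expWeight (by linarith [(abs_le.1 (hL v hv)).1])
  refine hA.exists_tendstoUniformlyOn_log_partitionFn hAne hw hwL hLw fun ε hε => ?_
  obtain ⟨δ, hδ, hVδ⟩ := Metric.uniformContinuousOn_iff_le.1
    (hAc.uniformContinuousOn_of_continuous hVA) ε hε
  have hmod : ∀ v ∈ A, ∀ v' ∈ A, edist v v' ≤ ENNReal.ofReal δ →
      w v ≤ ENNReal.ofReal (Real.exp ε) * w v' := fun v hv v' hv' hvv' => by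
    have hdist := hVδ v hv v' hv' ((edist_le_ofReal hδ.le).1 hvv')
    exact expWeight_le_exp_mul_expWeight (by linarith [(abs_le.1 hdist).2])
  obtain ⟨g, hg, hg1, hqg⟩ := exists_pos_ofReal_le_and_mul_le_one one_ne_zero
    (C := 2 * (ENNReal.ofReal (Real.exp ε) * ENNReal.ofReal (Real.exp L) ^ 2)) (by finiteness)
  obtain ⟨D, hD, hsqD⟩ := hsq (ENNReal.ofReal g) (by simpa using hg)
  exact exists_partitionSup_le_mul_partitionFn hA hAc hreach hw hwL hLw ENNReal.ofReal_ne_top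
    (by simpa using hδ) (by finiteness)
    (hsqD.partitionFn_le hA hw hwL hLw hg1 (by rwa [← mul_assoc]) hmod)

end Pressure

section ShiftDefect

variable {E F : Type*} [AddCommGroup E] [MeasurableSpace E] [AddCommGroup F] [MeasurableSpace F]

/-- Translating `μ` by `h` changes it by at most `D` in total variation, expressed by testing
against measurable functions with values in `[0, c]`. -/
def ShiftDefectLE (μ : Measure E) (h : E) (D : ℝ≥0∞) : Prop :=
  ∀ Φ : E → ℝ≥0∞, Measurable Φ → ∀ c : ℝ≥0∞, (∀ x, Φ x ≤ c) →
    ∫⁻ x, Φ (x + h) ∂μ ≤ ∫⁻ x, Φ x ∂μ + c * D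

variable {μ : Measure E} {h h' : E} {D D' : ℝ≥0∞}

theorem ShiftDefectLE.mono (hμ : ShiftDefectLE μ h D) (hD : D ≤ D') : ShiftDefectLE μ h D' :=
  fun Φ hΦ c hc => (hμ Φ hΦ c hc).trans (by gcongr)

theorem ShiftDefectLE.add [MeasurableAdd E] (hμ : ShiftDefectLE μ h D)
    (hμ' : ShiftDefectLE μ h' D') : ShiftDefectLE μ (h + h') (D + D') := by
  intro Φ hΦ c hc
  calc ∫⁻ x, Φ (x + (h + h')) ∂μ = ∫⁻ x, Φ (x + h + h') ∂μ := by simp only [add_assoc]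
    _ ≤ ∫⁻ x, Φ (x + h') ∂μ + c * D :=
        hμ (fun x => Φ (x + h')) (hΦ.comp (measurable_add_const h')) c fun x => hc _
    _ ≤ ∫⁻ x, Φ x ∂μ + c * D' + c * D := by
        gcongr
        exact hμ' Φ hΦ c hc
    _ = ∫⁻ x, Φ x ∂μ + c * (D + D') := by ring

theorem shiftDefectLE_sum [MeasurableAdd E] {ι : Type*} {s : Finset ι} {h : ι → E} {D : ι → ℝ≥0∞}
    (hμ : ∀ i ∈ s, ShiftDefectLE μ (h i) (D i)) :
    ShiftDefectLE μ (∑ i ∈ s, h i) (∑ i ∈ s, D i) := by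
  induction s using Finset.cons_induction with
  | empty => exact fun Φ _ c _ => by simp
  | cons i s hi ih =>
    rw [Finset.sum_cons, Finset.sum_cons]
    exact (hμ i (Finset.mem_cons_self i s)).add (ih fun j hj => hμ j (Finset.mem_cons_of_mem hj))

theorem ShiftDefectLE.map [MeasurableAdd F] (hμ : ShiftDefectLE μ h D) {φ : E →+ F}
    (hφ : Measurable φ) : ShiftDefectLE (μ.map φ) (φ h) D := by
  intro Φ hΦ c hc
  have hΦh : Measurable fun y => Φ (y + φ h) := hΦ.comp (measurable_add_const _)
  rw [lintegral_map hΦh hφ, lintegral_map hΦ hφ]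
  simpa only [map_add] using hμ (fun x => Φ (φ x)) (hΦ.comp hφ) c fun x => hc _

theorem ShiftDefectLE.conv [MeasurableAdd₂ E] [SFinite μ] (hμ : ShiftDefectLE μ h D)
    (ν : Measure E) [IsProbabilityMeasure ν] : ShiftDefectLE (μ ∗ ν) h D := by
  intro Φ hΦ c hc
  have hΦh : Measurable fun x => Φ (x + h) := hΦ.comp (measurable_add_const h)
  rw [Measure.conv_comm, Measure.lintegral_conv hΦh, Measure.lintegral_conv hΦ]
  calc ∫⁻ z, ∫⁻ x, Φ (z + x + h) ∂μ ∂ν ≤ ∫⁻ z, (∫⁻ x, Φ (z + x) ∂μ + c * D) ∂ν := by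
        gcongr with z
        simpa only [add_assoc] using
          hμ (fun x => Φ (z + x)) (hΦ.comp (measurable_const_add z)) c fun x => hc _
    _ = ∫⁻ z, ∫⁻ x, Φ (z + x) ∂μ ∂ν + c * D := by
        rw [lintegral_add_right _ measurable_const, lintegral_const, measure_univ, mul_one]

variable {p : ℝ → ℝ} {L : ℝ≥0} {a b : ℝ}

theorem ofReal_comp_sub_le_add_indicator (hL : LipschitzWith L p)
    (hsupp : Function.support p ⊆ Set.Icc a b) (s t : ℝ) :
    ENNReal.ofReal (p (t - s)) ≤ ENNReal.ofReal (p t) +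
      (Set.Icc (a + s) (b + s)).indicator (fun _ => L * ‖s‖ₑ) t := by
  by_cases hts : p (t - s) = 0
  · simp [hts]
  · have ht : t ∈ Set.Icc (a + s) (b + s) := by
      simpa only [Set.mem_Icc, le_sub_iff_add_le, sub_le_iff_le_add] using hsupp hts
    have hdist := (le_abs_self _).trans (hL.dist_le_mul (t - s) t)
    rw [dist_eq_norm, sub_sub_cancel_left, norm_neg] at hdist
    rw [Set.indicator_of_mem ht, ← ofReal_norm, ← ENNReal.ofReal_coe_nnreal,
      ← ENNReal.ofReal_mul L.coe_nonneg]
    exact (ENNReal.ofReal_le_ofReal (sub_le_iff_le_add'.1 hdist)).trans ENNReal.ofReal_add_le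

theorem shiftDefectLE_withDensity (hL : LipschitzWith L p)
    (hsupp : Function.support p ⊆ Set.Icc a b) (s : ℝ) :
    ShiftDefectLE (volume.withDensity fun x => ENNReal.ofReal (p x)) s
      (L * ENNReal.ofReal (b - a) * ‖s‖ₑ) := by
  intro Φ hΦ c hc
  have hp : Measurable fun x => ENNReal.ofReal (p x) := hL.continuous.measurable.ennreal_ofReal
  have hΦs : Measurable fun x => Φ (x + s) := hΦ.comp (measurable_add_const s)
  rw [lintegral_withDensity_eq_lintegral_mul _ hp hΦs,
    lintegral_withDensity_eq_lintegral_mul _ hp hΦ]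
  simp only [Pi.mul_apply]
  let ι : ℝ → ℝ≥0∞ := (Set.Icc (a + s) (b + s)).indicator fun _ => L * ‖s‖ₑ
  calc ∫⁻ t, ENNReal.ofReal (p t) * Φ (t + s)
      = ∫⁻ t, ENNReal.ofReal (p (t - s)) * Φ t := by
        rw [← lintegral_sub_right_eq_self (fun t => ENNReal.ofReal (p t) * Φ (t + s)) s]
        simp only [sub_add_cancel]
    _ ≤ ∫⁻ t, (ENNReal.ofReal (p t) * Φ t + c * ι t) := by
        gcongr with t
        calc ENNReal.ofReal (p (t - s)) * Φ t ≤ (ENNReal.ofReal (p t) + ι t) * Φ t := by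
              gcongr
              exact ofReal_comp_sub_le_add_indicator hL hsupp s t
          _ ≤ ENNReal.ofReal (p t) * Φ t + c * ι t := by
              rw [add_mul, mul_comm c]
              gcongr
              exact hc t
    _ = (∫⁻ t, ENNReal.ofReal (p t) * Φ t) + c * (L * ENNReal.ofReal (b - a) * ‖s‖ₑ) := by
        have hι : Measurable ι := measurable_const.indicator measurableSet_Icc
        rw [lintegral_add_right _ (hι.const_mul c), lintegral_const_mul _ hι,
          lintegral_indicator_const measurableSet_Icc, Real.volume_Icc, add_sub_add_right_eq_sub,
          mul_right_comm]

end ShiftDefect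

section RandomSeries

variable {ι Ω α E : Type*} [MeasurableSpace α] [NormedAddCommGroup E]
  [SecondCountableTopology E] [MeasurableSpace E] [BorelSpace E]

/-- The σ-algebra generated by those members of the family `ξ` whose index lies in `s`. -/
abbrev sigmaGen (ξ : ι → Ω → α) (s : Set ι) : MeasurableSpace Ω :=
  ⨆ i ∈ s, MeasurableSpace.comap (ξ i) inferInstance

theorem sigmaGen_mono (ξ : ι → Ω → α) : Monotone (sigmaGen ξ) := fun _ _ => biSup_mono

theorem measurable_sigmaGen {ξ : ι → Ω → α} {s : Set ι} {i : ι} (hi : i ∈ s) :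
    Measurable[sigmaGen ξ s] (ξ i) :=
  (comap_measurable (ξ i)).mono
    (le_biSup (fun i => MeasurableSpace.comap (ξ i) inferInstance) hi) le_rfl

theorem measurable_sigmaGen_of_hasSum {β : Type*} [Countable β] {ξ : ι → Ω → α} {s : Set ι}
    {g : β → ι} (hg : ∀ j, g j ∈ s) {f : β → α → E} (hf : ∀ j, Measurable (f j)) {X : Ω → E}
    (hX : ∀ ω, HasSum (fun j => f j (ξ (g j) ω)) (X ω)) : Measurable[sigmaGen ξ s] X := by
  let := sigmaGen ξ s
  have hterm (j : β) : StronglyMeasurable fun ω => f j (ξ (g j) ω) :=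
    ((hf j).comp (measurable_sigmaGen (hg j))).stronglyMeasurable
  exact (StronglyMeasurable.hasSum hterm hX).measurable

variable {mΩ : MeasurableSpace Ω} {P : Measure Ω} {ξ : ι → Ω → α}

theorem sigmaGen_le (hξ : ∀ i, Measurable (ξ i)) (s : Set ι) : sigmaGen ξ s ≤ mΩ :=
  iSup₂_le fun i _ => (hξ i).comap_le

theorem indep_sigmaGen_of_disjoint (hξ : ∀ i, Measurable (ξ i)) (hind : iIndepFun ξ P)
    {s t : Set ι} (hst : Disjoint s t) : Indep (sigmaGen ξ s) (sigmaGen ξ t) P :=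
  indep_iSup_of_disjoint (fun i => (hξ i).comap_le) hind.iIndep hst

variable [Countable ι] {f : ι → α → E} {X : Ω → E}

theorem indepFun_hasSum_sub (hξ : ∀ i, Measurable (ξ i)) (hind : iIndepFun ξ P)
    (hf : ∀ j, Measurable (f j)) (hX : ∀ ω, HasSum (fun j => f j (ξ j ω)) (X ω)) (i : ι) :
    IndepFun (ξ i) (fun ω => X ω - f i (ξ i ω)) P := by
  have hrest (ω : Ω) : HasSum (fun j : {j // j ∉ ({i} : Finset ι)} => f j (ξ j ω))
      (X ω - f i (ξ i ω)) := by
    rw [Finset.hasSum_compl_iff (f := fun j => f j (ξ j ω)), Finset.sum_singleton, sub_add_cancel]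
    exact hX ω
  have hrestMeas : Measurable[sigmaGen ξ {i}ᶜ] fun ω => X ω - f i (ξ i ω) :=
    measurable_sigmaGen_of_hasSum (s := {i}ᶜ) (g := fun j : {j // j ∉ ({i} : Finset ι)} => j.1)
      (fun j hj => j.2 (Finset.mem_singleton.2 hj)) (fun j => hf j) hrest
  exact indep_of_indep_of_le_right (indep_of_indep_of_le_left
    (indep_sigmaGen_of_disjoint hξ hind disjoint_compl_right)
    (measurable_sigmaGen (Set.mem_singleton i)).comap_le) hrestMeas.comap_le

theorem identDistrib_of_hasSum [CompleteSpace E] {Ω' : Type*} {mΩ' : MeasurableSpace Ω'}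
    {P' : Measure Ω'} {ξ' : ι → Ω' → α} {X' : Ω' → E} (hf : ∀ j, Measurable (f j))
    (hid : ∀ j, IdentDistrib (ξ j) (ξ' j) P P') (hind : iIndepFun ξ P) (hind' : iIndepFun ξ' P')
    (hX : ∀ ω, HasSum (fun j => f j (ξ j ω)) (X ω))
    (hX' : ∀ ω, HasSum (fun j => f j (ξ' j ω)) (X' ω)) : IdentDistrib X X' P P' := by
  have hsum : Measurable fun x : ι → α => ∑' j, f j (x j) :=
    Measurable.tsum fun j => (hf j).comp (measurable_pi_apply j)
  have hXeq : X = fun ω => ∑' j, f j (ξ j ω) := funext fun ω => (hX ω).tsum_eq.symm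
  have hXeq' : X' = fun ω => ∑' j, f j (ξ' j ω) := funext fun ω => (hX' ω).tsum_eq.symm
  rw [hXeq, hXeq']
  exact (IdentDistrib.pi hid hind hind').comp hsum

theorem ShiftDefectLE.map_hasSum [NormedSpace ℝ E] [IsProbabilityMeasure P] {ξ : ι → Ω → ℝ}
    (hξ : ∀ i, Measurable (ξ i)) (hind : iIndepFun ξ P) {v : ι → E}
    (hX : ∀ ω, HasSum (fun j => ξ j ω • v j) (X ω)) {i : ι} {s : ℝ} {D : ℝ≥0∞}
    (hs : ShiftDefectLE (P.map (ξ i)) s D) : ShiftDefectLE (P.map X) (s • v i) D := by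
  let φ : ℝ →ₗ[ℝ] E := LinearMap.toSpanSingleton ℝ E (v i)
  have hφ : Measurable φ := by
    change Measurable fun t : ℝ => t • v i
    fun_prop
  have hrest := indepFun_hasSum_sub (f := fun j t => t • v j) hξ hind (fun j => by fun_prop) hX i
  have hXm : Measurable X := (measurable_sigmaGen_of_hasSum (f := fun j t => t • v j)
    Set.mem_univ (fun j => by fun_prop) hX).mono (sigmaGen_le hξ _) le_rfl
  have hZm : Measurable fun ω => X ω - ξ i ω • v i := hXm.sub ((hξ i).smul_const _)
  have hconv : P.map X = ((P.map (ξ i)).map φ) ∗ P.map fun ω => X ω - ξ i ω • v i := by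
    rw [Measure.map_map hφ (hξ i), ← IndepFun.map_add_eq_map_conv_map (hφ.comp (hξ i)) hZm
      (hrest.comp hφ measurable_id)]
    congr with ω
    simp [φ]
  have hZ : IsProbabilityMeasure (P.map fun ω => X ω - ξ i ω • v i) :=
    Measure.isProbabilityMeasure_map hZm.aemeasurable
  rw [hconv]
  exact (hs.map (φ := φ.toAddMonoidHom) hφ).conv _

end RandomSeries

section Support

theorem mem_msupp_withDensity {X : Type*} [TopologicalSpace X] [MeasurableSpace X] {μ : Measure X}
    [μ.IsOpenPosMeasure] {f : X → ℝ≥0∞} (hf : Measurable f) {x : X} (hfx : ContinuousAt f x)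
    (hx : f x ≠ 0) : x ∈ msupp (μ.withDensity f) := by
  intro U hU
  rw [pos_iff_ne_zero, Ne, withDensity_apply_eq_zero hf]
  exact (μ.measure_pos_of_mem_nhds (inter_mem (hfx.eventually_ne hx) hU)).ne'

theorem ae_mem_msupp {X : Type*} [TopologicalSpace X] [HereditarilyLindelofSpace X]
    [MeasurableSpace X] (μ : Measure X) : ∀ᵐ x ∂μ, x ∈ msupp μ := by
  have hsupp : msupp μ = μ.support := by
    ext x
    exact (Measure.mem_support_iff_forall x).symm
  rw [hsupp]
  exact Measure.support_mem_ae

variable {ι Ω : Type*} {mΩ : MeasurableSpace Ω} {P : Measure Ω}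

theorem mem_msupp_map_pi {α : ι → Type*} [∀ i, TopologicalSpace (α i)]
    [∀ i, MeasurableSpace (α i)] [∀ i, OpensMeasurableSpace (α i)] {ξ : (i : ι) → Ω → α i}
    (hξ : ∀ i, Measurable (ξ i)) (hind : iIndepFun ξ P) {x : (i : ι) → α i}
    (hx : ∀ i, x i ∈ msupp (P.map (ξ i))) : x ∈ msupp (P.map fun ω i => ξ i ω) := by
  intro U hU
  rw [nhds_pi, mem_pi'] at hU
  obtain ⟨I, t, ht, htU⟩ := hU
  have hpos : 0 < P (⋂ i ∈ I, ξ i ⁻¹' interior (t i)) := by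
    rw [hind.meas_biInter fun i _ => ⟨_, isOpen_interior.measurableSet, rfl⟩]
    refine pos_iff_ne_zero.2 (Finset.prod_ne_zero_iff.2 fun i _ => ?_)
    rw [← Measure.map_apply (hξ i) isOpen_interior.measurableSet]
    exact (hx i _ (interior_mem_nhds.2 (ht i))).ne'
  calc 0 < P (⋂ i ∈ I, ξ i ⁻¹' interior (t i)) := hpos
    _ ≤ P ((fun ω i => ξ i ω) ⁻¹' U) := measure_mono fun ω hω =>
        htU fun i hi => interior_subset (Set.mem_iInter₂.1 hω i hi)
    _ ≤ P.map (fun ω i => ξ i ω) U :=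
        Measure.le_map_apply (measurable_pi_lambda _ hξ).aemeasurable U

theorem hasSum_sq_of_hasSum_smul {E : Type*} [SeminormedAddCommGroup E] [InnerProductSpace ℝ E]
    {v : ι → E} (hv : Orthonormal ℝ v) {c : ι → ℝ} {x : E} (hx : HasSum (fun j => c j • v j) x) :
    HasSum (fun j => c j ^ 2) (‖x‖ ^ 2) := by
  refine (hx.norm.pow 2).congr fun s => ?_
  rw [← real_inner_self_eq_norm_sq, hv.inner_sum]
  simp [sq]

theorem eventually_tsum_sq_mul_lt {b : ι → ℝ} (hb : Summable fun j => b j ^ 2) {r : ℝ}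
    (hr : 0 < r) :
    ∀ᶠ s in 𝓝 (0 : ι → ℝ), (∀ j, |s j| ≤ 1) → ∑' j, (b j * s j) ^ 2 < r := by
  refine eventually_inf_principal.1 (?_ : ∀ᶠ s in 𝓝 (0 : ι → ℝ) ⊓ 𝓟 {s | ∀ j, |s j| ≤ 1}, _)
  have hterm (j : ι) : Tendsto (fun s : ι → ℝ => (b j * s j) ^ 2)
      (𝓝 0 ⊓ 𝓟 {s | ∀ j, |s j| ≤ 1}) (𝓝 0) := by
    have hcont : Continuous fun s : ι → ℝ => (b j * s j) ^ 2 := by fun_prop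
    simpa using (hcont.tendsto 0).mono_left inf_le_left
  have hbound : ∀ᶠ s in 𝓝 (0 : ι → ℝ) ⊓ 𝓟 {s | ∀ j, |s j| ≤ 1},
      ∀ j, ‖(b j * s j) ^ 2‖ ≤ b j ^ 2 := by
    filter_upwards [mem_inf_of_right (mem_principal_self _)] with s hs j
    rw [norm_pow, norm_mul, mul_pow, Real.norm_eq_abs, sq_abs]
    exact mul_le_of_le_one_right (sq_nonneg _) (pow_le_one₀ (norm_nonneg _) (hs j))
  have hlim := tendsto_tsum_of_dominated_convergence hb hterm hbound
  rw [tsum_zero] at hlim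
  exact hlim.eventually_lt_const hr

theorem zero_mem_msupp_map_hasSum [Countable ι] {E : Type*} [NormedAddCommGroup E]
    [InnerProductSpace ℝ E] [SecondCountableTopology E] [MeasurableSpace E] [BorelSpace E]
    {v : ι → E} (hv : Orthonormal ℝ v) {b : ι → ℝ} (hb : Summable fun j => b j ^ 2)
    {ξ : ι → Ω → ℝ} (hξ : ∀ i, Measurable (ξ i)) (hind : iIndepFun ξ P)
    (hξ1 : ∀ᵐ ω ∂P, ∀ i, |ξ i ω| ≤ 1) (hξ0 : ∀ i, 0 ∈ msupp (P.map (ξ i))) {X : Ω → E}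
    (hX : ∀ ω, HasSum (fun j => (b j * ξ j ω) • v j) (X ω)) : 0 ∈ msupp (P.map X) := by
  intro U hU
  obtain ⟨r, hr, hrU⟩ := Metric.mem_nhds_iff.1 hU
  have hXm : Measurable X := (measurable_sigmaGen_of_hasSum (f := fun j t => (b j * t) • v j)
    Set.mem_univ (fun j => by fun_prop) hX).mono (sigmaGen_le hξ _) le_rfl
  let W : Set (ι → ℝ) := {s | (∀ j, |s j| ≤ 1) → ∑' j, (b j * s j) ^ 2 < r ^ 2}
  have hWX : ∀ᵐ ω ∂P, (ξ · ω) ∈ W → X ω ∈ U := by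
    filter_upwards [hξ1] with ω hω hωW
    have hnorm : ‖X ω‖ ^ 2 < r ^ 2 := (hasSum_sq_of_hasSum_smul hv (hX ω)).tsum_eq ▸ hωW hω
    exact hrU (mem_ball_zero_iff.2 (lt_of_pow_lt_pow_left₀ 2 hr.le hnorm))
  calc 0 < P.map (fun ω i => ξ i ω) (interior W) := mem_msupp_map_pi hξ hind hξ0 _
        (interior_mem_nhds.2 (eventually_tsum_sq_mul_lt hb (pow_pos hr 2)))
    _ = P ((fun ω i => ξ i ω) ⁻¹' interior W) :=
        Measure.map_apply (measurable_pi_lambda _ hξ) isOpen_interior.measurableSet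
    _ ≤ P (X ⁻¹' U) := measure_mono_ae (hWX.mono fun ω hω h => hω (interior_subset h))
    _ ≤ P.map X U := Measure.le_map_apply hXm.aemeasurable U

end Support

section Attainability

variable {E : Type*} [NormedAddCommGroup E] {S : E → E} {K B B' : Set E}

theorem add_mem_attainDom (hS : Continuous S) {u x : E} (hu : u ∈ attainDom S K B) (hx : x ∈ K) :
    S u + x ∈ attainDom S K B := by
  refine map_mem_closure (f := fun v => S v + x) (hS.add continuous_const) hu fun v hv => ?_
  obtain ⟨n, hn⟩ := Set.mem_iUnion.1 hv
  exact Set.mem_iUnion.2 ⟨n + 1, Set.add_mem_add (Set.mem_image_of_mem S hn) hx⟩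

theorem subset_attainDom : B ⊆ attainDom S K B :=
  (Set.subset_iUnion (attain S K B) 0).trans subset_closure

theorem isCompact_attain (hS : Continuous S) (hK : IsCompact K) (hB : IsCompact B) (n : ℕ) :
    IsCompact (attain S K B n) := by
  induction n with
  | zero => exact hB
  | succ n ih => exact (ih.image hS).add hK

theorem attain_mono (h : B ⊆ B') (n : ℕ) : attain S K B n ⊆ attain S K B' n := by
  induction n with
  | zero => exact h
  | succ n ih => exact Set.add_subset_add_right (Set.image_mono ih)

theorem norm_iterate_le_max {T : E → E} {a r R : ℝ} (ha₀ : 0 ≤ a) (ha₁ : a ≤ 1) (hr : 0 ≤ r)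
    (hrR : r ≤ R) (hT : ∀ u ∈ Metric.closedBall (0 : E) R, ‖T u‖ ≤ max (a * ‖u‖) r) {u : E}
    (hu : u ∈ Metric.closedBall (0 : E) R) (n : ℕ) : ‖T^[n] u‖ ≤ max (a ^ n * R) r := by
  induction n with
  | zero => simpa using Or.inl hu
  | succ n ih =>
    have hR : a ^ n * R ≤ R := mul_le_of_le_one_left (hr.trans hrR) (pow_le_one₀ ha₀ ha₁)
    rw [Function.iterate_succ_apply']
    calc ‖T (T^[n] u)‖ ≤ max (a * ‖T^[n] u‖) r :=
          hT _ (mem_closedBall_zero_iff.2 (ih.trans (max_le hR hrR)))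
      _ ≤ max (a * max (a ^ n * R) r) r := by gcongr
      _ ≤ max (a ^ (n + 1) * R) r := by
          rw [mul_max_of_nonneg _ _ ha₀, ← mul_assoc, ← pow_succ', max_assoc]
          exact max_le_max_left _ (max_le (mul_le_of_le_one_left hr ha₁) le_rfl)

end Attainability

section AdditiveNoise

variable {E : Type*} [NormedAddCommGroup E] [SecondCountableTopology E] [MeasurableSpace E]
  [BorelSpace E]

/-- The transition kernel of the chain `u_k = S(u_{k-1}) + η_k` whose noise terms `η_k` are
independent with law `μ`. -/
def addNoiseKernel (μ : Measure E) (S : E → E) : Kernel E E :=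
  (Kernel.id ×ₖ Kernel.const E μ).map fun p => S p.1 + p.2

variable {μ : Measure E} {S : E → E} {A : Set E}

theorem measurable_fst_comp_add_snd (hS : Measurable S) :
    Measurable fun p : E × E => S p.1 + p.2 :=
  (hS.comp measurable_fst).add measurable_snd

theorem isMarkovKernel_addNoiseKernel [IsProbabilityMeasure μ] (hS : Measurable S) :
    IsMarkovKernel (addNoiseKernel μ S) :=
  Kernel.IsMarkovKernel.map _ (measurable_fst_comp_add_snd hS)

variable [SFinite μ]

theorem addNoiseKernel_apply (hS : Measurable S) (u : E) :
    addNoiseKernel μ S u = μ.map (S u + ·) := by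
  have hadd := measurable_fst_comp_add_snd hS
  rw [addNoiseKernel, Kernel.map_apply _ hadd, Kernel.prod_apply, Kernel.id_apply,
    Kernel.const_apply, Measure.dirac_prod, Measure.map_map hadd (by fun_prop)]
  rfl

theorem lintegral_addNoiseKernel (hS : Measurable S) {F : E → ℝ≥0∞} (hF : Measurable F) (u : E) :
    ∫⁻ v, F v ∂addNoiseKernel μ S u = ∫⁻ x, F (S u + x) ∂μ := by
  rw [addNoiseKernel_apply hS, lintegral_map hF (measurable_const_add _)]

theorem isAbsorbing_addNoiseKernel_iff (hS : Measurable S) (hAm : MeasurableSet A) :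
    IsAbsorbing (addNoiseKernel μ S) A ↔ ∀ u ∈ A, ∀ᵐ x ∂μ, S u + x ∈ A := by
  refine forall₂_congr fun u _ => ?_
  rw [addNoiseKernel_apply hS]
  exact ae_map_iff (measurable_const_add _).aemeasurable hAm

theorem isAbsorbing_addNoiseKernel_attainDom (hS : Continuous S) (B : Set E) :
    IsAbsorbing (addNoiseKernel μ S) (attainDom S (msupp μ) B) := by
  refine (isAbsorbing_addNoiseKernel_iff hS.measurable isClosed_closure.measurableSet).2
    fun u hu => ?_
  filter_upwards [ae_mem_msupp μ] with x hx
  exact add_mem_attainDom hS hu hx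

-- The noise at `u'` is shifted by `pr (S u - S u')`, which is the coupling behind the estimate.
theorem isSqueezing_addNoiseKernel (hS : Measurable S) (hAm : MeasurableSet A)
    (hA : IsAbsorbing (addNoiseKernel μ S) A) {pr : E → E} {g C D : ℝ≥0∞}
    (hpr : ∀ u ∈ A, ∀ u' ∈ A, edist (S u - S u') (pr (S u - S u')) ≤ g * edist u u')
    (hlip : ∀ u ∈ A, ∀ u' ∈ A, edist (S u) (S u') ≤ C * edist u u')
    (hshift : ∀ h, ShiftDefectLE μ (pr h) (D * ‖h‖ₑ)) :
    IsSqueezing (addNoiseKernel μ S) A g (D * C) := by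
  classical
  intro u hu u' hu' F G hF hG c hFc hFG
  rw [isAbsorbing_addNoiseKernel_iff hS hAm] at hA
  rw [lintegral_addNoiseKernel hS hF, lintegral_addNoiseKernel hS hG]
  set h := pr (S u - S u')
  let Ψ : E → ℝ≥0∞ := A.piecewise (fun v => min c (G v)) fun _ => c
  have hΨ : Measurable Ψ := (measurable_const.min hG).piecewise hAm measurable_const
  have hΨc (v : E) : Ψ v ≤ c := by
    by_cases hv : v ∈ A <;> simp [Ψ, hv]
  have hFΨ (x : E) (hx : S u + x ∈ A) : F (S u + x) ≤ Ψ (S u' + (x + h)) := by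
    by_cases hv : S u' + (x + h) ∈ A
    · have hdist : edist (S u + x) (S u' + (x + h)) = edist (S u - S u') h := by
        rw [edist_eq_enorm_sub, edist_eq_enorm_sub]
        congr 1
        abel
      simpa [Ψ, hv] using ⟨hFc _ hx, hFG _ hx _ hv (hdist.trans_le (hpr u hu u' hu'))⟩
    · simpa [Ψ, hv] using hFc _ hx
  have hΨG (x : E) (hx : S u' + x ∈ A) : Ψ (S u' + x) ≤ G (S u' + x) := by simp [Ψ, hx]
  calc ∫⁻ x, F (S u + x) ∂μ ≤ ∫⁻ x, Ψ (S u' + (x + h)) ∂μ :=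
        lintegral_mono_ae ((hA u hu).mono hFΨ)
    _ ≤ ∫⁻ x, Ψ (S u' + x) ∂μ + c * (D * ‖S u - S u'‖ₑ) :=
        hshift _ (fun x => Ψ (S u' + x)) (hΨ.comp (measurable_const_add _)) c fun _ => hΨc _
    _ ≤ ∫⁻ x, G (S u' + x) ∂μ + c * (D * C * edist u u') := by
        rw [mul_assoc D, ← edist_eq_enorm_sub]
        gcongr ?_ + c * (D * ?_)
        · exact lintegral_mono_ae ((hA u' hu').mono hΨG)
        · exact hlip u hu u' hu'

theorem measure_ball_le_addNoiseKernel_ball (hS : Measurable S) {u y x : E} {δ ε : ℝ}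
    (hy : dist (S u) y ≤ δ) :
    μ (Metric.ball x ε) ≤ addNoiseKernel μ S u (Metric.ball (y + x) (δ + ε)) := by
  rw [addNoiseKernel_apply hS, Measure.map_apply (measurable_const_add _) measurableSet_ball]
  refine measure_mono fun z hz => ?_
  calc dist (S u + z) (y + x) ≤ dist (S u) y + dist z x := dist_add_add_le _ _ _ _
    _ < δ + ε := add_lt_add_of_le_of_lt hy hz

theorem exists_le_pow_addNoiseKernel_ball_iterate (hS : Measurable S) (hAc : IsCompact A)
    (hA : IsAbsorbing (addNoiseKernel μ S) A) (hSA : Set.MapsTo S A A) (hSc : ContinuousOn S A)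
    (hzero : 0 ∈ msupp μ) (n : ℕ) {ε : ℝ} (hε : 0 < ε) :
    ∃ c : ℝ≥0∞, c ≠ 0 ∧ ∀ u ∈ A, c ≤ (addNoiseKernel μ S ^ n) u (Metric.ball (S^[n] u) ε) := by
  induction n generalizing ε with
  | zero =>
    refine ⟨1, one_ne_zero, fun u _ => ?_⟩
    exact (Measure.dirac_apply_of_mem (Metric.mem_ball_self hε)).ge
  | succ n ih =>
    have hε₂ := half_pos hε
    obtain ⟨δ, hδ, hSδ⟩ := Metric.uniformContinuousOn_iff.1
      (hAc.uniformContinuousOn_of_continuous hSc) (ε / 2) hε₂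
    obtain ⟨c, hc, hcball⟩ := ih hδ
    refine ⟨μ (Metric.ball 0 (ε / 2)) * c,
      mul_ne_zero (hzero _ (Metric.ball_mem_nhds 0 hε₂)).ne' hc, fun u hu => ?_⟩
    refine hA.mul_le_pow_succ hAc.measurableSet measurableSet_ball measurableSet_ball hu
      (hcball u hu) fun v hv hvA => ?_
    have hstep := measure_ball_le_addNoiseKernel_ball (μ := μ) (x := 0) (ε := ε / 2) hS
      (hSδ v hvA _ (hSA.iterate n hu) hv).le
    rwa [add_zero, add_halves, ← Function.iterate_succ_apply' S] at hstep

theorem isReachable_addNoiseKernel_zero (hS : Measurable S) (hAc : IsCompact A)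
    (hA : IsAbsorbing (addNoiseKernel μ S) A) (hSA : Set.MapsTo S A A) (hSc : ContinuousOn S A)
    (hzero : 0 ∈ msupp μ)
    (hattr : ∀ r : ℝ, 0 < r → ∃ n : ℕ, ∀ u ∈ A, ‖S^[n] u‖ < r) :
    IsReachable (addNoiseKernel μ S) A 0 := by
  intro U hU
  obtain ⟨ε, hε, hεU⟩ := Metric.mem_nhds_iff.1 hU
  have hε₂ := half_pos hε
  obtain ⟨n, hn⟩ := hattr (ε / 2) hε₂
  obtain ⟨c, hc, hcball⟩ :=
    exists_le_pow_addNoiseKernel_ball_iterate hS hAc hA hSA hSc hzero n hε₂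
  refine ⟨n, c, hc, fun u hu => (hcball u hu).trans (measure_mono (subset_trans ?_ hεU))⟩
  refine Metric.ball_subset_ball' ?_
  rw [dist_zero_right]
  linarith [hn u hu]

theorem isReachable_addNoiseKernel_add (hS : Measurable S) (hAm : MeasurableSet A)
    (hA : IsAbsorbing (addNoiseKernel μ S) A) {x y : E}
    (hy : IsReachable (addNoiseKernel μ S) A y) (hSy : ContinuousAt S y) (hx : x ∈ msupp μ) :
    IsReachable (addNoiseKernel μ S) A (S y + x) := by
  intro U hU
  obtain ⟨ε, hε, hεU⟩ := Metric.mem_nhds_iff.1 hU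
  have hε₂ := half_pos hε
  obtain ⟨δ, hδ, hSδ⟩ := Metric.continuousAt_iff.1 hSy (ε / 2) hε₂
  obtain ⟨s, c, hc, hcball⟩ := hy _ (Metric.ball_mem_nhds y hδ)
  refine ⟨s + 1, μ (Metric.ball x (ε / 2)) * c,
    mul_ne_zero (hx _ (Metric.ball_mem_nhds x hε₂)).ne' hc, fun u hu => ?_⟩
  refine le_trans ?_ (measure_mono hεU)
  refine hA.mul_le_pow_succ hAm measurableSet_ball measurableSet_ball hu (hcball u hu)
    fun v hv _ => ?_
  have hstep := measure_ball_le_addNoiseKernel_ball (μ := μ) (x := x) (ε := ε / 2) hS (hSδ hv).le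
  rwa [add_halves] at hstep

theorem isReachable_addNoiseKernel_of_mem_attainDom (hS : Continuous S) (hAm : MeasurableSet A)
    (hA : IsAbsorbing (addNoiseKernel μ S) A)
    (hzero : IsReachable (addNoiseKernel μ S) A 0) {y : E}
    (hy : y ∈ attainDom S (msupp μ) {0}) : IsReachable (addNoiseKernel μ S) A y := by
  refine closure_minimal (Set.iUnion_subset fun n => ?_)
    (isClosed_setOf_isReachable (addNoiseKernel μ S) A) hy
  induction n with
  | zero =>
    rintro _ rfl
    exact hzero
  | succ n ih =>
    rintro _ ⟨_, ⟨z, hz, rfl⟩, x, hx, rfl⟩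
    exact isReachable_addNoiseKernel_add hS.measurable hAm hA (ih hz) hS.continuousAt hx

end AdditiveNoise

section Trajectories

theorem ae_forall_traj_mem {E : Type} [NormedAddCommGroup E] {Ω : Type*} {mΩ : MeasurableSpace Ω}
    {P : Measure Ω} {S : E → E} {η : ℕ → Ω → E} {K A : Set E} (hηK : ∀ k, ∀ᵐ ω ∂P, η k ω ∈ K)
    (hA : ∀ v ∈ A, ∀ x ∈ K, S v + x ∈ A) {u : E} (hu : u ∈ A) :
    ∀ᵐ ω ∂P, ∀ k, traj S η (fun _ => u) k ω ∈ A := by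
  filter_upwards [ae_all_iff.2 hηK] with ω hω k
  induction k with
  | zero => exact hu
  | succ k ih => exact hA _ ih _ (hω _)

variable {E : Type} [NormedAddCommGroup E] [SecondCountableTopology E] [MeasurableSpace E]
  [BorelSpace E] {Ω : Type*}

theorem lintegral_mul_comp_add_of_indep {m mΩ : MeasurableSpace Ω} {P : Measure Ω}
    [IsFiniteMeasure P] (hm : m ≤ mΩ) {W : Ω → ℝ≥0∞} {Y Z : Ω → E} (hW : Measurable[m] W)
    (hY : Measurable[m] Y) (hZ : Measurable Z)
    (hind : Indep m (MeasurableSpace.comap Z inferInstance) P)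
    {S : E → E} (hS : Measurable S) {F : E → ℝ≥0∞} (hF : Measurable F) :
    ∫⁻ ω, W ω * F (S (Y ω) + Z ω) ∂P =
      ∫⁻ ω, W ω * ∫⁻ v, F v ∂addNoiseKernel (P.map Z) S (Y ω) ∂P := by
  have hWY : Measurable[m] fun ω => (W ω, Y ω) := hW.prodMk hY
  have hWY' : Measurable fun ω => (W ω, Y ω) := hWY.mono hm le_rfl
  have hlaw : P.map (fun ω => ((W ω, Y ω), Z ω)) = (P.map fun ω => (W ω, Y ω)).prod (P.map Z) :=
    (indepFun_iff_map_prod_eq_prod_map_map hWY'.aemeasurable hZ.aemeasurable).1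
      (indep_of_indep_of_le_left hind hWY.comap_le)
  have hintegrand : Measurable fun q : (ℝ≥0∞ × E) × E => q.1.1 * F (S q.1.2 + q.2) := by fun_prop
  calc ∫⁻ ω, W ω * F (S (Y ω) + Z ω) ∂P
      = ∫⁻ q, q.1.1 * F (S q.1.2 + q.2) ∂P.map fun ω => ((W ω, Y ω), Z ω) :=
        (lintegral_map hintegrand (hWY'.prodMk hZ)).symm
    _ = ∫⁻ q, ∫⁻ x, q.1 * F (S q.2 + x) ∂P.map Z ∂P.map fun ω => (W ω, Y ω) := by
        rw [hlaw, lintegral_prod _ hintegrand.aemeasurable]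
    _ = ∫⁻ ω, ∫⁻ x, W ω * F (S (Y ω) + x) ∂P.map Z ∂P :=
        lintegral_map hintegrand.lintegral_prod_right' hWY'
    _ = ∫⁻ ω, W ω * ∫⁻ v, F v ∂addNoiseKernel (P.map Z) S (Y ω) ∂P := by
        refine lintegral_congr fun ω => ?_
        rw [lintegral_addNoiseKernel hS hF, lintegral_const_mul _ (by fun_prop)]

variable {mΩ : MeasurableSpace Ω} {P : Measure Ω} {ℱ : Filtration ℕ mΩ} {η : ℕ → Ω → E} {S : E → E}

theorem measurable_traj (hS : Measurable S) (hη : ∀ k, Measurable[ℱ k] (η k)) (u : E) (k : ℕ) :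
    Measurable[ℱ k] (traj S η (fun _ => u) k) := by
  induction k with
  | zero => exact measurable_const
  | succ k ih => exact (hS.comp (ih.mono (ℱ.mono k.le_succ) le_rfl)).add (hη (k + 1))

variable [IsProbabilityMeasure P] {μ : Measure E}

theorem lintegral_prod_traj_mul (hS : Measurable S)
    (hη : ∀ k, Measurable[ℱ k] (η k))
    (hind : ∀ k, Indep (ℱ k) (MeasurableSpace.comap (η (k + 1)) inferInstance) P)
    (hlaw : ∀ k, P.map (η k) = μ) {w F : E → ℝ≥0∞} (hw : Measurable w) (hF : Measurable F)
    (u : E) (k : ℕ) :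
    ∫⁻ ω, (∏ n ∈ Finset.Icc 1 k, w (traj S η (fun _ => u) n ω)) * F (traj S η (fun _ => u) k ω) ∂P =
      (feynmanKac (addNoiseKernel μ S) w)^[k] F u := by
  induction k generalizing F with
  | zero => simp [traj]
  | succ k ih =>
    have hpast : Measurable[ℱ k] fun ω => ∏ n ∈ Finset.Icc 1 k, w (traj S η (fun _ => u) n ω) :=
      Finset.measurable_fun_prod _ fun n hn => hw.comp
        ((measurable_traj hS hη u n).mono (ℱ.mono (Finset.mem_Icc.1 hn).2) le_rfl)
    rw [Function.iterate_succ_apply, ← ih (measurable_feynmanKac hw hF)]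
    simp only [Finset.prod_Icc_succ_top (Nat.le_add_left 1 k), mul_assoc]
    have hstep := lintegral_mul_comp_add_of_indep (ℱ.le k) hpast (measurable_traj hS hη u k)
      ((hη (k + 1)).mono (ℱ.le _) le_rfl) (hind k) hS (hw.mul hF)
    rwa [hlaw] at hstep

theorem integral_exp_sum_traj (hS : Measurable S)
    (hη : ∀ k, Measurable[ℱ k] (η k))
    (hind : ∀ k, Indep (ℱ k) (MeasurableSpace.comap (η (k + 1)) inferInstance) P)
    (hlaw : ∀ k, P.map (η k) = μ) {V : E → ℝ} (hV : Measurable V) (u : E) (k : ℕ) :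
    ∫ ω, Real.exp (∑ n ∈ Finset.Icc 1 k, V (traj S η (fun _ => u) n ω)) ∂P =
      (partitionFn (addNoiseKernel μ S) (expWeight V) k u).toReal := by
  have htraj (n : ℕ) : Measurable (traj S η (fun _ => u) n) :=
    (measurable_traj hS hη u n).mono (ℱ.le n) le_rfl
  rw [integral_eq_lintegral_of_nonneg_ae (ae_of_all _ fun ω => (Real.exp_pos _).le)
    (Measurable.aestronglyMeasurable (by fun_prop)), partitionFn,
    ← lintegral_prod_traj_mul (w := expWeight V) hS hη hind hlaw hV.exp.ennreal_ofReal
      measurable_const]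
  congr! 3 with ω
  rw [mul_one, Real.exp_sum, ENNReal.ofReal_prod_of_nonneg fun _ _ => (Real.exp_pos _).le]
  rfl

end Trajectories

section HilbertNoise

variable {E : Type} [NormedAddCommGroup E] [InnerProductSpace ℝ E]

theorem enorm_repr_apply_le (e : HilbertBasis ℕ ℝ E) (v : E) (j : ℕ) : ‖e.repr v j‖ₑ ≤ ‖v‖ₑ := by
  rw [enorm_le_iff_norm_le, ← e.repr.norm_map v]
  exact lp.norm_apply_le_norm two_ne_zero (e.repr v) j

variable [MeasurableSpace E] {Ω : Type*} {mΩ : MeasurableSpace Ω} {P : Measure Ω}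
  {e : HilbertBasis ℕ ℝ E} {η : ℕ → Ω → E} {b : ℕ → ℝ} {ξ : ℕ → ℕ → Ω → ℝ} {p : ℕ → ℝ → ℝ}

theorem CondD.iIndepFun_row (hD : CondD P e η b ξ p) (k : ℕ) : iIndepFun (fun j => ξ j k) P := by
  obtain ⟨-, -, -, -, hind, -⟩ := hD
  exact hind.precomp (g := fun j => (j, k)) fun _ _ h => congrArg Prod.fst h

variable [SecondCountableTopology E] [BorelSpace E]

theorem CondD.exists_filtration (hD : CondD P e η b ξ p) :
    ∃ ℱ : Filtration ℕ mΩ, (∀ k, Measurable[ℱ k] (η k)) ∧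
      ∀ k, Indep (ℱ k) (MeasurableSpace.comap (η (k + 1)) inferInstance) P := by
  obtain ⟨-, -, hsum, hmeas, hind, -⟩ := hD
  let ζ : ℕ × ℕ → Ω → ℝ := fun jk => ξ jk.1 jk.2
  have hζ (jk : ℕ × ℕ) : Measurable (ζ jk) := hmeas jk.1 jk.2
  have hη {s : Set (ℕ × ℕ)} {k : ℕ} (hs : ∀ j, (j, k) ∈ s) : Measurable[sigmaGen ζ s] (η k) :=
    measurable_sigmaGen_of_hasSum (f := fun j t => (b j * t) • e j) hs
      (fun j => by fun_prop) (hsum k)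
  refine ⟨⟨fun k => sigmaGen ζ {jk | jk.2 ≤ k},
    fun _ _ h => sigmaGen_mono ζ fun _ hjk => hjk.trans h, fun _ => sigmaGen_le hζ _⟩,
    fun k => hη fun _ => le_refl k, fun k => ?_⟩
  have hdisj : Disjoint {jk : ℕ × ℕ | jk.2 ≤ k} {jk | jk.2 = k + 1} :=
    Set.disjoint_left.2 fun _ hle heq => k.lt_succ_self.not_ge (heq.symm.trans_le hle)
  exact indep_of_indep_of_le_right (indep_sigmaGen_of_disjoint hζ hind hdisj)
    (hη fun _ => rfl).comap_le

theorem CondD.map_eq [CompleteSpace E] (hD : CondD P e η b ξ p) (k l : ℕ) :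
    P.map (η k) = P.map (η l) := by
  have hrow := hD.iIndepFun_row
  obtain ⟨-, -, hsum, hmeas, -, hlaw, -⟩ := hD
  have hid (j : ℕ) : IdentDistrib (ξ j k) (ξ j l) P P :=
    ⟨(hmeas j k).aemeasurable, (hmeas j l).aemeasurable, by rw [hlaw, hlaw]⟩
  exact (identDistrib_of_hasSum (f := fun j t => (b j * t) • e j) (fun j => by fun_prop) hid
    (hrow k) (hrow l) (hsum k) (hsum l)).map_eq

theorem CondD.ae_mem_msupp_map [CompleteSpace E] (hD : CondD P e η b ξ p) (k l : ℕ) :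
    ∀ᵐ ω ∂P, η k ω ∈ msupp (P.map (η l)) := by
  obtain ⟨ℱ, hη, -⟩ := hD.exists_filtration
  rw [← hD.map_eq k l]
  exact ae_of_ae_map ((hη k).mono (ℱ.le k) le_rfl).aemeasurable (ae_mem_msupp _)

theorem CondD.shiftDefectLE_smul [IsProbabilityMeasure P] (hD : CondD P e η b ξ p)
    {j : ℕ} (hbj : b j ≠ 0) {L : ℝ≥0} (hL : LipschitzWith L (p j)) (k : ℕ) (a : ℝ) :
    ShiftDefectLE (P.map (η k)) (a • e j) (L * ENNReal.ofReal 2 * ‖a / b j‖ₑ) := by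
  have hrow := hD.iIndepFun_row k
  obtain ⟨-, -, hsum, hmeas, -, hlaw, -, -, hsupp⟩ := hD
  have hshift := shiftDefectLE_withDensity hL (hsupp j) (a / b j)
  rw [← hlaw j k] at hshift
  have hη (ω : Ω) : HasSum (fun j => ξ j k ω • b j • e j) (η k ω) := by
    simpa only [smul_smul, mul_comm] using hsum k ω
  have hmap := hshift.map_hasSum (fun j => hmeas j k) hrow hη
  rwa [smul_smul, div_mul_cancel₀ _ hbj, sub_neg_eq_add, one_add_one_eq_two] at hmap

theorem CondD.exists_shiftDefectLE_projB [IsProbabilityMeasure P] (hD : CondD P e η b ξ p)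
    (hb : ∀ j, b j ≠ 0) (k N : ℕ) :
    ∃ D : ℝ≥0∞, D ≠ ⊤ ∧ ∀ v, ShiftDefectLE (P.map (η k)) (projB e N v) (D * ‖v‖ₑ) := by
  have hlip : ∀ j, ∃ L : ℝ≥0, LipschitzWith L (p j) := hD.2.2.2.2.2.2.1
  choose L hL using hlip
  refine ⟨∑ j ∈ Finset.range N, L j * ENNReal.ofReal 2 * ‖(b j)⁻¹‖ₑ,
    ENNReal.sum_ne_top.2 fun j _ => by finiteness, fun v => ?_⟩
  rw [Finset.sum_mul]
  refine shiftDefectLE_sum fun j _ => (hD.shiftDefectLE_smul (hb j) (hL j) k _).mono ?_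
  rw [div_eq_inv_mul, enorm_mul, ← mul_assoc]
  gcongr
  exact enorm_repr_apply_le e v j

theorem CondD.zero_mem_msupp (hD : CondD P e η b ξ p) (k : ℕ) : 0 ∈ msupp (P.map (η k)) := by
  have hrow := hD.iIndepFun_row k
  obtain ⟨-, hbsum, hsum, hmeas, -, hlaw, hlip, hp0, hsupp⟩ := hD
  have hp (j : ℕ) : Continuous fun x => ENNReal.ofReal (p j x) := by
    obtain ⟨L, hL⟩ := hlip j
    exact ENNReal.continuous_ofReal.comp hL.continuous
  have hξ1 (j : ℕ) : ∀ᵐ ω ∂P, |ξ j k ω| ≤ 1 := by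
    refine ae_of_ae_map (p := fun x => |x| ≤ 1) (hmeas j k).aemeasurable ?_
    rw [hlaw, ae_withDensity_iff (hp j).measurable]
    exact ae_of_all _ fun x hx => abs_le.2 (hsupp j fun h => hx (by simp [h]))
  refine zero_mem_msupp_map_hasSum e.orthonormal hbsum (fun j => hmeas j k) hrow
    (ae_all_iff.2 hξ1) (fun j => ?_) (hsum k)
  rw [hlaw]
  exact mem_msupp_withDensity (hp j).measurable (hp j).continuousAt (by simpa using hp0 j)

end HilbertNoise

section Conditions

theorem CondB.isBounded_attainDom {E : Type} [NormedAddCommGroup E] {S : E → E} {K B : Set E}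
    (hB : CondB S K) (hS : Continuous S) (hK : IsCompact K) (hBc : IsCompact B) :
    Bornology.IsBounded (attainDom S K B) := by
  obtain ⟨ρ, -, k₀, -, habs⟩ := hB
  obtain ⟨R, hR, hBR⟩ := hBc.isBounded.subset_closedBall_lt 0 (0 : E)
  have hinit : Bornology.IsBounded (⋃ n ∈ Finset.range (k₀ R), attain S K B n) :=
    (Bornology.isBounded_biUnion_finset _).2 fun n _ => (isCompact_attain hS hK hBc n).isBounded
  refine ((hinit.union (Metric.isBounded_closedBall (x := 0) (r := ρ))).subset ?_).closure
  refine Set.iUnion_subset fun n => ?_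
  obtain hn | hn := lt_or_ge n (k₀ R)
  · exact Set.subset_union_of_subset_left
      (Set.subset_biUnion_of_mem (u := attain S K B) (Finset.mem_range.2 hn)) _
  · exact Set.subset_union_of_subset_right ((attain_mono hBR n).trans (habs R hR.le n hn)) _

theorem totallyBounded_of_forall_exists_dist_lt {X : Type*} [PseudoMetricSpace X] {s : Set X}
    (h : ∀ ε > 0, ∃ t, TotallyBounded t ∧ ∀ x ∈ s, ∃ y ∈ t, dist x y < ε) : TotallyBounded s := by
  refine Metric.totallyBounded_iff.2 fun ε hε => ?_
  obtain ⟨t, ht, hst⟩ := h (ε / 2) (half_pos hε)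
  obtain ⟨F, hF, htF⟩ := Metric.totallyBounded_iff.1 ht (ε / 2) (half_pos hε)
  refine ⟨F, hF, fun x hx => ?_⟩
  obtain ⟨y, hy, hxy⟩ := hst x hx
  obtain ⟨z, hz, hyz⟩ := Set.mem_iUnion₂.1 (htF hy)
  refine Set.mem_iUnion₂.2 ⟨z, hz, ?_⟩
  calc dist x z ≤ dist x y + dist y z := dist_triangle _ _ _
    _ < ε / 2 + ε / 2 := add_lt_add hxy hyz
    _ = ε := add_halves ε

variable {E : Type} [NormedAddCommGroup E] [InnerProductSpace ℝ E] {S : E → E}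
  {e : HilbertBasis ℕ ℝ E}

theorem totallyBounded_image_projB {s : Set E} (hs : Bornology.IsBounded s) (N : ℕ) :
    TotallyBounded (projB e N '' s) := by
  let coord : E → Fin N → ℝ := fun u j => e.repr u j
  let synth : (Fin N → ℝ) →L[ℝ] E :=
    ∑ j : Fin N, (ContinuousLinearMap.proj j).smulRight (e j)
  have hfactor : projB e N = synth ∘ coord := by
    ext1 u
    simp [projB, synth, coord, Finset.sum_range]
  obtain ⟨R, hR₀, hR⟩ := hs.subset_closedBall_lt 0 (0 : E)
  have hcoord : coord '' s ⊆ Metric.closedBall 0 R := by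
    rintro _ ⟨u, hu, rfl⟩
    rw [mem_closedBall_zero_iff, pi_norm_le_iff_of_nonneg hR₀.le]
    exact fun j => (enorm_le_iff_norm_le.1 (enorm_repr_apply_le e u j)).trans
      (mem_closedBall_zero_iff.1 (hR hu))
  rw [hfactor, Set.image_comp]
  exact ((isCompact_closedBall _ _).totallyBounded.subset hcoord).image synth.uniformContinuous

theorem totallyBounded_of_projB {s : Set E} (hs : Bornology.IsBounded s)
    (happrox : ∀ ε > 0, ∃ N, ∀ x ∈ s, ‖x - projB e N x‖ < ε) : TotallyBounded s := by
  refine totallyBounded_of_forall_exists_dist_lt fun ε hε => ?_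
  obtain ⟨N, hN⟩ := happrox ε hε
  refine ⟨projB e N '' s, totallyBounded_image_projB hs N, fun x hx => ?_⟩
  exact ⟨_, Set.mem_image_of_mem _ hx, (dist_eq_norm _ _).trans_lt (hN x hx)⟩

theorem CondC.exists_lipschitzOnWith (hC : CondC S e) {R : ℝ} (hR : 0 < R) :
    ∃ C : ℝ≥0, LipschitzOnWith C S (Metric.closedBall 0 R) := by
  obtain ⟨γ, hγ, -, -, hsq⟩ := hC R hR
  refine ⟨(γ 0).toNNReal, LipschitzOnWith.of_dist_le_mul fun u hu v hv => ?_⟩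
  simpa [dist_eq_norm, projB, (hγ 0).le] using hsq 0 u hu v hv

theorem CondC.continuous (hC : CondC S e) : Continuous S := by
  refine continuous_iff_continuousAt.2 fun u => ?_
  obtain ⟨C, hlip⟩ := hC.exists_lipschitzOnWith (R := ‖u‖ + 1) (by positivity)
  refine hlip.continuousOn.continuousAt ?_
  exact Metric.closedBall_mem_nhds_of_mem (mem_ball_zero_iff.2 (lt_add_one _))

theorem CondC.totallyBounded_image (hC : CondC S e) {s : Set E} (hs : Bornology.IsBounded s) :
    TotallyBounded (S '' s) := by
  obtain ⟨R, hR, hsR⟩ := hs.subset_closedBall_lt 0 (0 : E)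
  obtain ⟨C, hlip⟩ := hC.exists_lipschitzOnWith hR
  obtain ⟨γ, hγ, -, hγ0, hsq⟩ := hC R hR
  have hball : (0 : E) ∈ Metric.closedBall 0 R := Metric.mem_closedBall_self hR.le
  have himage : S '' s = (· + S 0) '' ((fun u => S u - S 0) '' s) := by
    simp [Set.image_image]
  rw [himage]
  refine TotallyBounded.image (totallyBounded_of_projB (e := e) ?_ fun ε hε => ?_)
    (uniformContinuous_id.add_const _)
  · refine (Metric.isBounded_closedBall (x := 0) (r := C * R)).subset ?_
    rintro _ ⟨u, hu, rfl⟩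
    rw [mem_closedBall_zero_iff, ← dist_eq_norm]
    exact (hlip.dist_le_mul u (hsR hu) 0 hball).trans
      (mul_le_mul_of_nonneg_left (hsR hu) C.coe_nonneg)
  · have hlim : Tendsto (fun N => γ N * R) atTop (𝓝 0) := by simpa using hγ0.mul_const R
    obtain ⟨N, hN⟩ := (hlim.eventually_lt_const hε).exists
    refine ⟨N, ?_⟩
    rintro _ ⟨u, hu, rfl⟩
    calc ‖S u - S 0 - projB e N (S u - S 0)‖ ≤ γ N * ‖u - 0‖ := hsq N u (hsR hu) 0 hball
      _ ≤ γ N * R := by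
          rw [sub_zero]
          exact mul_le_mul_of_nonneg_left (mem_closedBall_zero_iff.1 (hsR hu)) (hγ N).le
      _ < ε := hN

theorem CondC.isCompact_attainDom [CompleteSpace E] (hC : CondC S e) {K B : Set E}
    (hK : IsCompact K) (hBc : IsCompact B) (hbdd : Bornology.IsBounded (attainDom S K B)) :
    IsCompact (attainDom S K B) := by
  have himage : IsCompact (closure (S '' attainDom S K B)) :=
    (hC.totallyBounded_image hbdd).closure.isCompact_of_isClosed isClosed_closure
  refine (hBc.union (himage.add hK)).of_isClosed_subset isClosed_closure
    (closure_minimal (Set.iUnion_subset fun n => ?_) (hBc.union (himage.add hK)).isClosed)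
  cases n with
  | zero => exact Set.subset_union_left
  | succ n =>
    refine Set.subset_union_of_subset_right (Set.add_subset_add_right ?_) _
    refine (Set.image_mono ?_).trans subset_closure
    exact (Set.subset_iUnion (attain S K B) n).trans subset_closure

theorem CondA.exists_norm_iterate_lt (hA : CondA S) (R : ℝ) {r : ℝ} (hr : 0 < r) :
    ∃ n : ℕ, ∀ u ∈ Metric.closedBall (0 : E) R, ‖S^[n] u‖ < r := by
  have hrR : r / 2 < max R r := (half_lt_self hr).trans_le (le_max_right R r)
  obtain ⟨-, -, a, ha₀, ha₁, n₀, -, -, hstab⟩ := hA.2 (max R r) (r / 2) (half_pos hr) hrR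
  have hlim : Tendsto (fun j : ℕ => a ^ j * max R r) atTop (𝓝 0) := by
    simpa using (tendsto_pow_atTop_nhds_zero_of_lt_one ha₀.le ha₁).mul_const (max R r)
  obtain ⟨j, hj⟩ := (hlim.eventually_lt_const hr).exists
  refine ⟨n₀ * j, fun u hu => ?_⟩
  rw [Function.iterate_mul]
  exact (norm_iterate_le_max ha₀.le ha₁.le (half_pos hr).le hrR.le
    (fun v hv => hstab v hv n₀ le_rfl)
    (Metric.closedBall_subset_closedBall (le_max_left R r) hu) j).trans_lt
    (max_lt hj (half_lt_self hr))

end Conditions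

section ScaledCGF

variable {Ω X : Type*} [MeasurableSpace Ω] {P : Measure Ω}

theorem integrable_exp_convexCombo {f g : Ω → ℝ} (hf : Integrable (fun ω => Real.exp (f ω)) P)
    (hg : Integrable (fun ω => Real.exp (g ω)) P) {s t : ℝ} (hs : 0 ≤ s) (ht : 0 ≤ t)
    (hst : s + t = 1) : Integrable (fun ω => Real.exp (s * f ω + t * g ω)) P := by
  have hfm : AEMeasurable f P := Real.aemeasurable_of_aemeasurable_exp hf.aemeasurable
  have hgm : AEMeasurable g P := Real.aemeasurable_of_aemeasurable_exp hg.aemeasurable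
  refine ((hf.const_mul s).add (hg.const_mul t)).mono'
    (AEMeasurable.aestronglyMeasurable (by fun_prop)) (ae_of_all _ fun ω => ?_)
  rw [Real.norm_eq_abs, Real.abs_exp]
  exact convexOn_exp.2 (Set.mem_univ (f ω)) (Set.mem_univ (g ω)) hs ht hst

theorem integral_exp_convexCombo_le {f g : Ω → ℝ} (hf : Integrable (fun ω => Real.exp (f ω)) P)
    (hg : Integrable (fun ω => Real.exp (g ω)) P) {s t : ℝ} (hs : 0 ≤ s) (ht : 0 ≤ t)
    (hst : s + t = 1) :
    ∫ ω, Real.exp (s * f ω + t * g ω) ∂P ≤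
      (∫ ω, Real.exp (f ω) ∂P) ^ s * (∫ ω, Real.exp (g ω) ∂P) ^ t := by
  have hnonneg (h : Ω → ℝ) : 0 ≤ ∫ ω, Real.exp (h ω) ∂P :=
    integral_nonneg fun ω => (Real.exp_pos (h ω)).le
  have hofReal {h : Ω → ℝ} (hh : Integrable (fun ω => Real.exp (h ω)) P) :=
    ofReal_integral_eq_lintegral_ofReal hh (ae_of_all _ fun ω => (Real.exp_pos (h ω)).le)
  rw [← ENNReal.ofReal_le_ofReal_iff
      (mul_nonneg (Real.rpow_nonneg (hnonneg f) s) (Real.rpow_nonneg (hnonneg g) t)),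
    ENNReal.ofReal_mul (Real.rpow_nonneg (hnonneg f) s),
    ← ENNReal.ofReal_rpow_of_nonneg (hnonneg f) hs, ← ENNReal.ofReal_rpow_of_nonneg (hnonneg g) ht,
    hofReal (integrable_exp_convexCombo hf hg hs ht hst), hofReal hf, hofReal hg]
  refine le_trans (lintegral_congr fun ω => ?_).le (ENNReal.lintegral_mul_norm_pow_le
    hf.aemeasurable.ennreal_ofReal hg.aemeasurable.ennreal_ofReal hs ht hst)
  rw [ENNReal.ofReal_rpow_of_pos (Real.exp_pos _), ENNReal.ofReal_rpow_of_pos (Real.exp_pos _),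
    ← ENNReal.ofReal_mul (by positivity), Real.exp_add, mul_comm s, mul_comm t, Real.exp_mul,
    Real.exp_mul]

theorem log_integral_exp_convexCombo_le [NeZero P] {f g : Ω → ℝ}
    (hf : Integrable (fun ω => Real.exp (f ω)) P) (hg : Integrable (fun ω => Real.exp (g ω)) P)
    {s t : ℝ} (hs : 0 ≤ s) (ht : 0 ≤ t) (hst : s + t = 1) :
    Real.log (∫ ω, Real.exp (s * f ω + t * g ω) ∂P) ≤
      s * Real.log (∫ ω, Real.exp (f ω) ∂P) + t * Real.log (∫ ω, Real.exp (g ω) ∂P) := by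
  have hfpos := integral_exp_pos hf
  have hgpos := integral_exp_pos hg
  rw [← Real.log_rpow hfpos, ← Real.log_rpow hgpos, ← Real.log_mul (by positivity) (by positivity)]
  exact Real.log_le_log (integral_exp_pos (integrable_exp_convexCombo hf hg hs ht hst))
    (integral_exp_convexCombo_le hf hg hs ht hst)

/-- The scaled cumulant generating function `k⁻¹ log 𝔼 exp(∑_{n=1}^k V(x_n))` of a process `x`
with respect to the potential `V`; it vanishes for `k = 0`. -/
def scaledCGF (P : Measure Ω) (x : ℕ → Ω → X) (V : X → ℝ) (k : ℕ) : ℝ :=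
  (k : ℝ)⁻¹ * Real.log (∫ ω, Real.exp (∑ n ∈ Finset.Icc 1 k, V (x n ω)) ∂P)

theorem scaledCGF_const [IsProbabilityMeasure P] (x : ℕ → Ω → X) (c : ℝ) {k : ℕ} (hk : k ≠ 0) :
    scaledCGF P x (fun _ => c) k = c := by
  simp [scaledCGF, hk]

theorem tendsto_scaledCGF_const [IsProbabilityMeasure P] (x : ℕ → Ω → X) (c : ℝ) :
    Tendsto (scaledCGF P x fun _ => c) atTop (𝓝 c) := by
  refine tendsto_const_nhds.congr' ?_
  filter_upwards [eventually_ne_atTop 0] with k hk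
  exact (scaledCGF_const x c hk).symm

variable [TopologicalSpace X] [MeasurableSpace X] [OpensMeasurableSpace X] [IsProbabilityMeasure P]
  {x : ℕ → Ω → X}

theorem integrable_exp_sum_comp (hx : ∀ n, Measurable (x n)) (V : X →ᵇ ℝ) (k : ℕ) :
    Integrable (fun ω => Real.exp (∑ n ∈ Finset.Icc 1 k, V (x n ω))) P := by
  have hV : Measurable V := V.continuous.measurable
  refine Integrable.of_bound (C := Real.exp (k * ‖V‖))
    (Measurable.aestronglyMeasurable (by fun_prop)) (ae_of_all _ fun ω => ?_)
  rw [Real.norm_eq_abs, Real.abs_exp, Real.exp_le_exp]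
  simpa using Finset.sum_le_card_nsmul (Finset.Icc 1 k) (fun n => V (x n ω)) ‖V‖
    fun n _ => V.apply_le_norm _

theorem scaledCGF_convexCombo_le (hx : ∀ n, Measurable (x n)) (V₁ V₂ : X →ᵇ ℝ) {s t : ℝ}
    (hs : 0 ≤ s) (ht : 0 ≤ t) (hst : s + t = 1) (k : ℕ) :
    scaledCGF P x (s • V₁ + t • V₂) k ≤ s * scaledCGF P x V₁ k + t * scaledCGF P x V₂ k := by
  have hlog := log_integral_exp_convexCombo_le (P := P) (integrable_exp_sum_comp hx V₁ k)
    (integrable_exp_sum_comp hx V₂ k) hs ht hst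
  simp only [Finset.mul_sum, ← Finset.sum_add_distrib] at hlog
  calc scaledCGF P x (s • V₁ + t • V₂) k
      ≤ (k : ℝ)⁻¹ * (s * Real.log (∫ ω, Real.exp (∑ n ∈ Finset.Icc 1 k, V₁ (x n ω)) ∂P) +
          t * Real.log (∫ ω, Real.exp (∑ n ∈ Finset.Icc 1 k, V₂ (x n ω)) ∂P)) :=
        mul_le_mul_of_nonneg_left hlog (by positivity)
    _ = s * scaledCGF P x V₁ k + t * scaledCGF P x V₂ k := by
        simp only [scaledCGF]
        ring

theorem scaledCGF_le_add (hx : ∀ n, Measurable (x n)) {V₁ V₂ : X →ᵇ ℝ} {d : ℝ}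
    (hd : ∀ᵐ ω ∂P, ∀ n, V₁ (x n ω) ≤ d + V₂ (x n ω)) {k : ℕ} (hk : k ≠ 0) :
    scaledCGF P x V₁ k ≤ d + scaledCGF P x V₂ k := by
  have hint₁ := integrable_exp_sum_comp (P := P) hx V₁ k
  have hint₂ := integrable_exp_sum_comp (P := P) hx V₂ k
  have hsum : ∀ᵐ ω ∂P, Real.exp (∑ n ∈ Finset.Icc 1 k, V₁ (x n ω)) ≤
      Real.exp (k * d) * Real.exp (∑ n ∈ Finset.Icc 1 k, V₂ (x n ω)) := by
    filter_upwards [hd] with ω hω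
    rw [← Real.exp_add, Real.exp_le_exp]
    simpa [Finset.sum_add_distrib] using
      Finset.sum_le_sum fun n (_ : n ∈ Finset.Icc 1 k) => hω n
  have hlog := Real.log_le_log (integral_exp_pos hint₁)
    (integral_mono_ae hint₁ (hint₂.const_mul _) hsum)
  rw [integral_const_mul, Real.log_mul (Real.exp_pos _).ne' (integral_exp_pos hint₂).ne',
    Real.log_exp] at hlog
  calc scaledCGF P x V₁ k
      ≤ (k : ℝ)⁻¹ * (k * d +
          Real.log (∫ ω, Real.exp (∑ n ∈ Finset.Icc 1 k, V₂ (x n ω)) ∂P)) :=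
        mul_le_mul_of_nonneg_left hlog (by positivity)
    _ = d + scaledCGF P x V₂ k := by
        rw [mul_add, inv_mul_cancel_left₀ (Nat.cast_ne_zero.2 hk), scaledCGF]

variable {Q : (X →ᵇ ℝ) → ℝ}

theorem convexOn_of_tendsto_scaledCGF (hx : ∀ n, Measurable (x n))
    (hQ : ∀ V : X →ᵇ ℝ, Tendsto (scaledCGF P x V) atTop (𝓝 (Q V))) :
    ConvexOn ℝ Set.univ Q :=
  ⟨convex_univ, fun V₁ _ V₂ _ s t hs ht hst =>
    le_of_tendsto_of_tendsto' (hQ (s • V₁ + t • V₂))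
      (((hQ V₁).const_mul s).add ((hQ V₂).const_mul t))
      (scaledCGF_convexCombo_le hx V₁ V₂ hs ht hst)⟩

theorem abs_sub_le_iSup_of_tendsto_scaledCGF (hx : ∀ n, Measurable (x n)) {A : Set X}
    (hxA : ∀ᵐ ω ∂P, ∀ n, x n ω ∈ A)
    (hQ : ∀ V : X →ᵇ ℝ, Tendsto (scaledCGF P x V) atTop (𝓝 (Q V))) (V₁ V₂ : X →ᵇ ℝ) :
    |Q V₁ - Q V₂| ≤ ⨆ v : A, |V₁ v - V₂ v| := by
  have hbdd : BddAbove (Set.range fun v : A => |V₁ v - V₂ v|) := by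
    refine ⟨‖V₁ - V₂‖, ?_⟩
    rintro _ ⟨v, rfl⟩
    exact (V₁ - V₂).norm_coe_le_norm v
  have hdist (v : X) (hv : v ∈ A) : |V₁ v - V₂ v| ≤ ⨆ v : A, |V₁ v - V₂ v| :=
    le_ciSup hbdd ⟨v, hv⟩
  set d := ⨆ v : A, |V₁ v - V₂ v|
  have hle {W₁ W₂ : X →ᵇ ℝ} (hW : ∀ v ∈ A, W₁ v ≤ d + W₂ v) : Q W₁ ≤ d + Q W₂ := by
    refine le_of_tendsto_of_tendsto (hQ W₁) ((hQ W₂).const_add d) ?_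
    filter_upwards [eventually_ne_atTop 0] with k hk
    exact scaledCGF_le_add hx (hxA.mono fun ω hω n => hW _ (hω n)) hk
  rw [abs_sub_le_iff, sub_le_iff_le_add, sub_le_iff_le_add]
  exact ⟨hle fun v hv => sub_le_iff_le_add.1 (abs_sub_le_iff.1 (hdist v hv)).1,
    hle fun v hv => sub_le_iff_le_add.1 (abs_sub_le_iff.1 (hdist v hv)).2⟩

end ScaledCGF

section ChainPressure

variable {E : Type} [NormedAddCommGroup E] [InnerProductSpace ℝ E] [SecondCountableTopology E]
  [MeasurableSpace E] [BorelSpace E] {Ω : Type*} {mΩ : MeasurableSpace Ω} {P : Measure Ω}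
  {S : E → E} {e : HilbertBasis ℕ ℝ E} {η : ℕ → Ω → E} {b : ℕ → ℝ} {ξ : ℕ → ℕ → Ω → ℝ}
  {p : ℕ → ℝ → ℝ}

theorem CondC.exists_isSqueezing_addNoiseKernel [IsProbabilityMeasure P] (hC : CondC S e)
    (hD : CondD P e η b ξ p) (hb : ∀ j, b j ≠ 0) (k : ℕ) {A : Set E} (hAm : MeasurableSet A)
    (hAbdd : Bornology.IsBounded A) (hA : IsAbsorbing (addNoiseKernel (P.map (η k)) S) A)
    {g : ℝ≥0∞} (hg : g ≠ 0) :
    ∃ D : ℝ≥0∞, D ≠ ⊤ ∧ IsSqueezing (addNoiseKernel (P.map (η k)) S) A g D := by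
  obtain ⟨R, hR, hAR⟩ := hAbdd.subset_closedBall_lt 0 (0 : E)
  obtain ⟨C, hlip⟩ := hC.exists_lipschitzOnWith hR
  obtain ⟨γ, hγpos, -, hγ, hsq⟩ := hC R hR
  have hγ' : Tendsto (fun N => ENNReal.ofReal (γ N)) atTop (𝓝 0) := by
    simpa using ENNReal.tendsto_ofReal hγ
  obtain ⟨N, hN⟩ := (hγ'.eventually_lt_const (pos_iff_ne_zero.2 hg)).exists
  obtain ⟨D, hDtop, hshift⟩ := hD.exists_shiftDefectLE_projB hb k N
  refine ⟨D * C, ENNReal.mul_ne_top hDtop ENNReal.coe_ne_top,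
    isSqueezing_addNoiseKernel hC.continuous.measurable hAm hA (fun u hu u' hu' => ?_)
      (fun u hu u' hu' => hlip (hAR hu) (hAR hu')) hshift⟩
  calc edist (S u - S u') (projB e N (S u - S u')) ≤ ENNReal.ofReal (γ N) * edist u u' := by
        simp only [edist_eq_enorm_sub, ← ofReal_norm, ← ENNReal.ofReal_mul (hγpos N).le]
        exact ENNReal.ofReal_le_ofReal (hsq N u (hAR hu) u' (hAR hu'))
    _ ≤ g * edist u u' := by gcongr

variable [CompleteSpace E] [IsProbabilityMeasure P] {K : Set E}

theorem exists_tendstoUniformlyOn_scaledCGF_traj (hK : K = msupp (P.map (η 1)))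
    (hKc : IsCompact K)
    (hattr : ∀ R r : ℝ, 0 < r → ∃ n : ℕ, ∀ u ∈ Metric.closedBall (0 : E) R, ‖S^[n] u‖ < r)
    (hB : CondB S K) (hC : CondC S e) (hD : CondD P e η b ξ p) (hb : ∀ j, b j ≠ 0)
    {V : E → ℝ} (hV : Measurable V) (hVA : ContinuousOn V (attainDom S K {0})) :
    ∃ l : ℝ, TendstoUniformlyOn (fun k u => scaledCGF P (traj S η fun _ => u) V k) (fun _ => l)
      atTop (attainDom S K {0}) := by
  subst hK
  have hS : Continuous S := hC.continuous
  obtain ⟨ℱ, hη, hind⟩ := hD.exists_filtration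
  have hprob : IsProbabilityMeasure (P.map (η 1)) :=
    Measure.isProbabilityMeasure_map ((hη 1).mono (ℱ.le 1) le_rfl).aemeasurable
  have hmarkov := isMarkovKernel_addNoiseKernel (μ := P.map (η 1)) hS.measurable
  set K := msupp (P.map (η 1))
  set A := attainDom S K {0}
  have hAbdd : Bornology.IsBounded A := hB.isBounded_attainDom hS hKc isCompact_singleton
  have hAc : IsCompact A := hC.isCompact_attainDom hKc isCompact_singleton hAbdd
  have hzeroA : (0 : E) ∈ A := subset_attainDom rfl
  have hzeroK : (0 : E) ∈ K := hD.zero_mem_msupp 1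
  have habs : IsAbsorbing (addNoiseKernel (P.map (η 1)) S) A :=
    isAbsorbing_addNoiseKernel_attainDom hS _
  have hSA : Set.MapsTo S A A := fun u hu => by
    simpa using add_mem_attainDom hS hu hzeroK
  obtain ⟨R, hAR⟩ := hAbdd.subset_closedBall (0 : E)
  have hreach : IsReachable (addNoiseKernel (P.map (η 1)) S) A 0 :=
    isReachable_addNoiseKernel_zero hS.measurable hAc habs hSA hS.continuousOn hzeroK
      fun r hr => (hattr R r hr).imp fun n hn u hu => hn u (hAR hu)
  simp only [scaledCGF, integral_exp_sum_traj hS.measurable hη hind (fun k => hD.map_eq k 1) hV]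
  exact exists_tendstoUniformlyOn_log_partitionFn_expWeight habs hAc ⟨0, hzeroA⟩
    (fun g hg => hC.exists_isSqueezing_addNoiseKernel hD hb 1 hAc.measurableSet hAbdd habs hg)
    (fun y hy => isReachable_addNoiseKernel_of_mem_attainDom hS hAc.measurableSet habs hreach hy)
    hV hVA

end ChainPressure

theorem statement1_general
    {H : Type} [NormedAddCommGroup H] [InnerProductSpace ℝ H] [CompleteSpace H]
    [SecondCountableTopology H] [MeasurableSpace H] [BorelSpace H]
    {Ω : Type*} [MeasurableSpace Ω] (P : Measure Ω) [IsProbabilityMeasure P]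
    (S : H → H) (e : HilbertBasis ℕ ℝ H) (η : ℕ → Ω → H)
    (b : ℕ → ℝ) (ξ : ℕ → ℕ → Ω → ℝ) (p : ℕ → ℝ → ℝ)
    (K : Set H) (hK : K = msupp (Measure.map (η 1) P)) (hKcomp : IsCompact K)
    (hattr : ∀ R r : ℝ, 0 < r → ∃ n : ℕ, ∀ u ∈ Metric.closedBall (0 : H) R, ‖S^[n] u‖ < r)
    (hB : CondB S K) (hC : CondC S e) (hD : CondD P e η b ξ p) (hb : ∀ j, b j ≠ 0) :
    ∃ Q : (H →ᵇ ℝ) → ℝ,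
      (∀ V : H →ᵇ ℝ,
        TendstoUniformlyOn (fun (k : ℕ) (u : H) => scaledCGF P (traj S η fun _ => u) V k)
          (fun _ => Q V) atTop (attainDom S K ({0} : Set H))) ∧
      ConvexOn ℝ Set.univ Q ∧
      (∀ V₁ V₂ : H →ᵇ ℝ,
        |Q V₁ - Q V₂| ≤ ⨆ x : attainDom S K ({0} : Set H), |V₁ (x : H) - V₂ (x : H)|) ∧
      (∀ c : ℝ, Q (BoundedContinuousFunction.const H c) = c) := by
  have hS : Continuous S := hC.continuous
  obtain ⟨ℱ, hη, -⟩ := hD.exists_filtration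
  choose Q hQ using fun V : H →ᵇ ℝ => exists_tendstoUniformlyOn_scaledCGF_traj hK hKcomp hattr hB
    hC hD hb V.continuous.measurable V.continuous.continuousOn
  have hzero : (0 : H) ∈ attainDom S K {0} := subset_attainDom rfl
  have hQ₀ (V : H →ᵇ ℝ) : Tendsto (scaledCGF P (traj S η fun _ => 0) V) atTop (𝓝 (Q V)) :=
    (hQ V).tendsto_at hzero
  have htraj (k : ℕ) : Measurable (traj S η (fun _ => 0) k) :=
    (measurable_traj hS.measurable hη 0 k).mono (ℱ.le k) le_rfl
  have hstay := ae_forall_traj_mem (fun k => hK ▸ hD.ae_mem_msupp_map k 1)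
    (fun v hv x hx => add_mem_attainDom hS hv hx) hzero
  refine ⟨Q, hQ, convexOn_of_tendsto_scaledCGF htraj hQ₀,
    abs_sub_le_iSup_of_tendsto_scaledCGF htraj hstay hQ₀, fun c => ?_⟩
  exact tendsto_nhds_unique (hQ₀ (BoundedContinuousFunction.const H c))
    (tendsto_scaledCGF_const _ c)

/-- **Existence of the limit `Q(V)` (Property 1, Section 4)**: under Conditions (A)–(D) with
`b_j ≠ 0`, for every `V ∈ C(𝒜)` the limit
`Q(V) = lim_k k⁻¹ log 𝔼_u exp(∑_{n=1}^k V(u_n))` exists uniformly with respect to the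
deterministic initial condition `u ∈ 𝒜` and does not depend on `u`; the resulting functional
`Q` is convex, `1`-Lipschitz for the sup-norm over `𝒜`, and satisfies `Q(C) = C` on
constants. -/
theorem statement1
    {H : Type} [NormedAddCommGroup H] [InnerProductSpace ℝ H] [CompleteSpace H]
    [SecondCountableTopology H] [MeasurableSpace H] [BorelSpace H]
    {Ω : Type} [MeasurableSpace Ω] (P : Measure Ω) [IsProbabilityMeasure P]
    (S : H → H) (e : HilbertBasis ℕ ℝ H)
    (η : ℕ → Ω → H) (hηmeas : ∀ k, Measurable (η k))
    (b : ℕ → ℝ) (ξ : ℕ → ℕ → Ω → ℝ) (p : ℕ → ℝ → ℝ)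
    (K : Set H) (hK : K = msupp (Measure.map (η 1) P)) (hKcomp : IsCompact K)
    (hA : CondA S) (hB : CondB S K) (hC : CondC S e) (hD : CondD P e η b ξ p)
    (hb : ∀ j, b j ≠ 0) :
    ∃ Q : (H →ᵇ ℝ) → ℝ,
      -- the limit exists uniformly in the initial condition `u ∈ 𝒜` and is independent of `u`
      (∀ V : H →ᵇ ℝ,
        TendstoUniformlyOn
          (fun (k : ℕ) (u : H) => (k : ℝ)⁻¹ *
            Real.log (∫ ω,
              Real.exp (∑ n ∈ Finset.Icc 1 k, V (traj S η (fun _ => u) n ω)) ∂P))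
          (fun _ => Q V) atTop (attainDom S K ({0} : Set H))) ∧
      ConvexOn ℝ Set.univ Q ∧
      (∀ V₁ V₂ : H →ᵇ ℝ,
        |Q V₁ - Q V₂| ≤ ⨆ x : attainDom S K ({0} : Set H), |V₁ (x : H) - V₂ (x : H)|) ∧
      (∀ c : ℝ, Q (BoundedContinuousFunction.const H c) = c) := by
  exact statement1_general P S e η b ξ p K hK hKcomp (fun R _ => hA.exists_norm_iterate_lt R) hB hC
    hD hb
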